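/- arXiv:2209.07927 — 2 statements merged into one kernel-verified Lean document; each statement's English description precedes it below -/
import Mathlib

section
/- Let q be a prime power and n a positive integer. If a subset Y of GL(n,q) is (σ,τ)-transitive for some (σ,τ) ∈ Θ_{n,q}, then Y is (σ̂,τ̂)-transitive for every (σ̂,τ̂) ∈ Θ_{n,q} with (σ,τ) ⪯ (σ̂,τ̂), i.e. such that σ̂ refines σ and τ ⊴ τ̂. -/
open Module

/-- The linear automorphism of `F_q^n` induced by `g ∈ GL(n,q)`. -/
def glMap (F : Type) [Field F] {n : ℕ} (g : GL (Fin n) F) : (Fin n → F) →ₗ[F] (Fin n → F) :=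
  Matrix.mulVecLin (g : Matrix (Fin n) (Fin n) F)

/-- An element `α = (ρ, I)` of `Σ_{n,q}`: a composition `ρ` of `n` together with a set `I` of
indices of parts of `ρ`, where for `q = 2` every part not indexed by `I` must exceed `1`. -/
structure SigmaNQ (q n : ℕ) where
  ρ : Composition n
  I : Finset (Fin ρ.length)
  two : q = 2 → ∀ i ∉ I, 1 < ρ.blocksFun i

/-- The first component `σ` of the type of `α = (ρ,I)`: the multiset of parts `ρ_i` with
`i ∈ I` (a partition, recorded as an unordered multiset of parts). -/
def SigmaNQ.typeSigma {q n : ℕ} (α : SigmaNQ q n) : Multiset ℕ :=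
  α.I.val.map α.ρ.blocksFun

/-- The second component `τ` of the type of `α = (ρ,I)`: the multiset of parts `ρ_i` with
`i ∉ I` (a partition, recorded as an unordered multiset of parts). -/
def SigmaNQ.typeTau {q n : ℕ} (α : SigmaNQ q n) : Multiset ℕ :=
  α.Iᶜ.val.map α.ρ.blocksFun

/-- An `α`-flag for `α = (ρ,I) ∈ Σ_{n,q}`: a `ρ`-flag `{0} = V_0 ≤ V_1 ≤ ⋯ ≤ V_k = F_q^n`
with `dim(V_i/V_{i−1}) = ρ_i`, together with, for each `i ∈ I`, an ordered basis of the
quotient `V_i/V_{i−1}`, recorded by a tuple of `ρ_i` representatives in `V_i` whose classes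
modulo `V_{i−1}` are linearly independent (hence a basis of `V_i/V_{i−1}`). -/
structure AlphaFlag (F : Type) [Field F] {q n : ℕ} (α : SigmaNQ q n) where
  V : Fin (α.ρ.length + 1) → Submodule F (Fin n → F)
  mono : Monotone V
  bot_eq : V 0 = ⊥
  top_eq : V (Fin.last α.ρ.length) = ⊤
  dim : ∀ i : Fin α.ρ.length,
    finrank F (V i.succ) = finrank F (V i.castSucc) + α.ρ.blocksFun i
  B : ∀ i : Fin α.ρ.length, i ∈ α.I → Fin (α.ρ.blocksFun i) → (Fin n → F)
  B_mem : ∀ i hi m, B i hi m ∈ V i.succ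
  B_indep : ∀ i hi,
    LinearIndependent F (fun m => (V i.castSucc).mkQ (B i hi m))

/-- `g ∈ GL(n,q)` maps the `α`-flag `A` to the `α`-flag `C`: it maps the subspaces of `A`
to those of `C`, and the basis representatives of `A` to representatives of the same classes
as those of `C` (i.e. `g` maps the induced bases of the quotients to each other). -/
def MapsAlphaFlag (F : Type) [Field F] {q n : ℕ} {α : SigmaNQ q n} (g : GL (Fin n) F)
    (A C : AlphaFlag F α) : Prop :=
  (∀ j, Submodule.map (glMap F g) (A.V j) = C.V j) ∧
  (∀ i hi m, glMap F g (A.B i hi m) - C.B i hi m ∈ C.V i.castSucc)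

/-- A subset `Y` of `GL(n,q)` is transitive on `α`-flags: there is a constant `r` such that
for all `α`-flags `A`, `C` there are exactly `r` elements `g ∈ Y` mapping `A` to `C`. -/
def TransitiveOnAlphaFlags (F : Type) [Field F] [Fintype F] {q n : ℕ} (Y : Set (GL (Fin n) F))
    (α : SigmaNQ q n) : Prop :=
  ∃ r : ℕ, ∀ A C : AlphaFlag F α,
    Nat.card {g : GL (Fin n) F // g ∈ Y ∧ MapsAlphaFlag F g A C} = r


/-- The sum of the `k` largest entries of a multiset of natural numbers. For a partition
regarded as a multiset of parts, this is the `k`-th partial sum `λ_1 + ⋯ + λ_k` of the parts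
arranged in nonincreasing order. -/
def kLargestSum (μ : Multiset ℕ) (k : ℕ) : ℕ :=
  ((μ.powerset.filter (fun s => Multiset.card s ≤ k)).map Multiset.sum).sup

/-- Dominance order on partitions (as multisets of parts): `μ ⊴ λ` iff for every `k` the sum
of the `k` largest parts of `μ` is at most the sum of the `k` largest parts of `λ`. -/
def Dominates (μ lam : Multiset ℕ) : Prop :=
  ∀ k : ℕ, kLargestSum μ k ≤ kLargestSum lam k

/-- `κ` refines `ν` if `|κ| ≤ |ν|` and the multiset consisting of the parts of `κ` together
with `|ν| − |κ|` additional parts equal to `1` can be split into groups whose sums are exactly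
the parts of `ν`. -/
def Refines (κ ν : Multiset ℕ) : Prop :=
  κ.sum ≤ ν.sum ∧ ∃ M : Multiset (Multiset ℕ),
    M.sum = κ + Multiset.replicate (ν.sum - κ.sum) 1 ∧ M.map Multiset.sum = ν

/-- `(σ,τ) ∈ Θ_{n,q}`: `σ` and `τ` are partitions (multisets of positive parts) with
`|σ| + |τ| = n` such that, if `q = 2`, every part of `τ` is greater than `1`. -/
def InTheta (q n : ℕ) (σ τ : Multiset ℕ) : Prop :=
  (∀ p ∈ σ, 0 < p) ∧ (∀ p ∈ τ, 0 < p) ∧ σ.sum + τ.sum = n ∧ (q = 2 → ∀ p ∈ τ, 1 < p)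

/-- `Y ⊆ GL(n,q)` is `(σ,τ)`-transitive if it is transitive on `α`-flags for some
`α ∈ Σ_{n,q}` of type `(σ,τ)`. -/
def STTransitive (F : Type) [Field F] [Fintype F] (q n : ℕ) (Y : Set (GL (Fin n) F))
    (σ τ : Multiset ℕ) : Prop :=
  ∃ α : SigmaNQ q n, α.typeSigma = σ ∧ α.typeTau = τ ∧ TransitiveOnAlphaFlags F Y α

/-- The sums of `φ` over all translates `x H a` of the subgroup `H` vanish. -/
def CosetBalanced {G : Type*} [Group G] (φ : G → ℚ) (H : Subgroup G) : Prop :=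
  ∀ x a : G, ∑ᶠ h : H, φ (x * h * a) = 0

section CosetBalanced
open scoped Classical in
theorem cosetBalanced_iff {G : Type*} [Group G] [Fintype G] (φ : G → ℚ) (H : Subgroup G) :
    CosetBalanced φ H ↔ ∀ x a : G, ∑ g : G, (if g ∈ H then φ (x * g * a) else 0) = 0 := by
  refine forall_congr' fun x => forall_congr' fun a => ?_
  rw [finsum_eq_sum_of_fintype, ← Finset.sum_filter, Finset.sum_subtype (p := (· ∈ H))]
  simp

theorem CosetBalanced.mono {G : Type*} [Group G] [Finite G] {φ : G → ℚ} {H K : Subgroup G}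
    (h : CosetBalanced φ H) (hHK : H ≤ K) : CosetBalanced φ K := by
  classical
  have := Fintype.ofFinite G
  rw [cosetBalanced_iff] at h ⊢
  intro x a
  have key : ∑ u : G, (if u ∈ H then ∑ g : G, (if g ∈ K then φ (x * g * a) else 0) else 0) = 0 := by
    have : ∀ u : G, (if u ∈ H then ∑ g : G, (if g ∈ K then φ (x * g * a) else 0) else 0)
        = ∑ g : G, (if g ∈ K then (if u ∈ H then φ (x * u * (g * a)) else 0) else 0) := by
      intro u
      by_cases hu : u ∈ H
      · simp only [hu, if_true]
        rw [← Equiv.sum_comp (Equiv.mulLeft u)]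
        refine Finset.sum_congr rfl fun g _ => ?_
        simp [K.mul_mem_cancel_left (hHK hu), mul_assoc]
      · simp [hu]
    rw [Finset.sum_congr rfl fun u _ => this u, Finset.sum_comm]
    refine Finset.sum_eq_zero fun g _ => ?_
    split_ifs
    · exact h x (g * a)
    · simp
  rw [← Finset.sum_filter, Finset.sum_const, nsmul_eq_mul, mul_eq_zero] at key
  refine key.resolve_left (Nat.cast_ne_zero.2 (Finset.card_ne_zero.2 ⟨1, ?_⟩))
  simp [H.one_mem]

open scoped Classical in
theorem sum_sq_translates {G : Type*} [Group G] [Fintype G] (φ : G → ℚ) (H : Subgroup G) :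
    ∑ x : G, ∑ a : G, (∑ g : G, if g ∈ H then φ (x * g * a) else 0) ^ 2 =
      (∑ g : G, if g ∈ H then 1 else 0) *
        ∑ x : G, ∑ g : G, φ x * φ (x * g) * ∑ a : G, if a⁻¹ * g * a ∈ H then 1 else 0 := by
  have step : ∀ u : G, u ∈ H → ∑ x : G, ∑ a : G, ∑ g : G,
      (φ (x * u * a) * if g ∈ H then φ (x * g * a) else 0) =
      ∑ x : G, ∑ g : G, φ x * φ (x * g) * ∑ a : G, if a⁻¹ * g * a ∈ H then 1 else 0 := by
    intro u hu
    rw [Finset.sum_comm]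
    have h1 : ∀ a : G, ∑ x : G, ∑ g : G, (φ (x * u * a) * if g ∈ H then φ (x * g * a) else 0)
        = ∑ x : G, ∑ g : G, (φ x * if a * g * a⁻¹ ∈ H then φ (x * g) else 0) := by
      intro a
      rw [← Equiv.sum_comp (Equiv.mulRight (a⁻¹ * u⁻¹))]
      refine Finset.sum_congr rfl fun x _ => ?_
      rw [← Equiv.sum_comp ((MulAut.conj a).toEquiv.trans (Equiv.mulLeft u))]
      refine Finset.sum_congr rfl fun g _ => ?_
      simp [H.mul_mem_cancel_left hu, mul_assoc]
    rw [Finset.sum_congr rfl fun a _ => h1 a, Finset.sum_comm]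
    refine Finset.sum_congr rfl fun x _ => ?_
    rw [Finset.sum_comm]
    refine Finset.sum_congr rfl fun g _ => ?_
    rw [← Equiv.sum_comp (Equiv.inv G), Finset.mul_sum]
    refine Finset.sum_congr rfl fun a _ => ?_
    simp
  have h2 : ∀ x a : G, (∑ g : G, if g ∈ H then φ (x * g * a) else 0) ^ 2 =
      ∑ u : G, if u ∈ H then
        ∑ g : G, (φ (x * u * a) * if g ∈ H then φ (x * g * a) else 0) else 0 := by
    intro x a
    rw [sq, Finset.sum_mul]
    refine Finset.sum_congr rfl fun u _ => ?_
    split_ifs <;> simp [Finset.mul_sum]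
  simp_rw [h2]
  rw [Finset.sum_congr rfl fun x _ => Finset.sum_comm, Finset.sum_comm, Finset.sum_mul]
  refine Finset.sum_congr rfl fun u _ => ?_
  split_ifs with hu
  · rw [step u hu, one_mul]
  · simp

theorem CosetBalanced.of_conj_count {G : Type*} [Group G] [Finite G] {φ : G → ℚ} {H K : Subgroup G}
    (h : CosetBalanced φ H)
    (hc : ∀ g : G, Nat.card {a : G // a⁻¹ * g * a ∈ H} = Nat.card {a : G // a⁻¹ * g * a ∈ K}) :
    CosetBalanced φ K := by
  classical
  have := Fintype.ofFinite G
  rw [cosetBalanced_iff] at h ⊢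
  have hc' : ∀ g : G, (∑ a : G, if a⁻¹ * g * a ∈ H then (1 : ℚ) else 0) =
      ∑ a : G, if a⁻¹ * g * a ∈ K then (1 : ℚ) else 0 := by
    intro g
    have := hc g
    rw [Nat.card_eq_fintype_card, Nat.card_eq_fintype_card, Fintype.card_subtype,
      Fintype.card_subtype] at this
    simp [this]
  have hH := sum_sq_translates φ H
  have hK := sum_sq_translates φ K
  simp_rw [h] at hH
  simp only [ne_eq, OfNat.ofNat_ne_zero, not_false_eq_true, zero_pow, Finset.sum_const_zero] at hH
  have h0 : (∑ g : G, if g ∈ H then (1 : ℚ) else 0) ≠ 0 := by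
    rw [← Finset.sum_filter, Finset.sum_const, nsmul_eq_mul, mul_one, Nat.cast_ne_zero,
      Finset.card_ne_zero]
    exact ⟨1, by simp [H.one_mem]⟩
  have h1 := (mul_eq_zero.1 hH.symm).resolve_left h0
  simp_rw [hc'] at h1
  rw [h1, mul_zero] at hK
  intro x a
  have h2 := (Finset.sum_eq_zero_iff_of_nonneg
    (fun x _ => Finset.sum_nonneg fun a _ => sq_nonneg _)).1 hK x (Finset.mem_univ _)
  have h3 := (Finset.sum_eq_zero_iff_of_nonneg (fun a _ => sq_nonneg _)).1 h2 a (Finset.mem_univ _)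
  exact pow_eq_zero_iff (two_ne_zero) |>.1 h3

/-- Implications between balancedness conditions lift along a quotient `P → M` of a subgroup. -/
theorem CosetBalanced.of_quotient {G M : Type*} [Group G] [Finite G] [Group M] [Finite M]
    {φ : G → ℚ} {H H' : Subgroup G} {K K' : Subgroup M} (P : Subgroup G) (p : P →* M)
    (hp : Function.Surjective p)
    (hH : ∀ g : G, g ∈ H ↔ ∃ hg : g ∈ P, p ⟨g, hg⟩ ∈ K)
    (hH' : ∀ g : G, g ∈ H' ↔ ∃ hg : g ∈ P, p ⟨g, hg⟩ ∈ K')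
    (hloc : ∀ f : M → ℚ, CosetBalanced f K → CosetBalanced f K') (h : CosetBalanced φ H) : CosetBalanced φ H' := by
  classical
  have := Fintype.ofFinite G
  have := Fintype.ofFinite M
  have key : ∀ (H₀ : Subgroup G) (K₀ : Subgroup M) (_ : ∀ g : G, g ∈ H₀ ↔
      ∃ hg : g ∈ P, p ⟨g, hg⟩ ∈ K₀) (ψ : G → ℚ), (∑ g : G, if g ∈ H₀ then ψ g else 0)
      = ∑ k : M, if k ∈ K₀ then (∑ g : P, if p g = k then ψ g else 0) else 0 := by
    intro H₀ K₀ h₀ ψ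
    have h1 : (∑ g : G, if g ∈ H₀ then ψ g else 0) = ∑ g : P, if p g ∈ K₀ then ψ g else 0 := by
      have h2 : (∑ g : P, if p g ∈ K₀ then ψ g else 0) =
          ∑ g : P, (fun g : G => if g ∈ H₀ then ψ g else 0) g :=
        Finset.sum_congr rfl fun g _ => by simp [h₀]
      rw [h2, ← Finset.sum_subtype (Finset.univ.filter (· ∈ P)) (p := (· ∈ P)) (by simp)
        (fun g : G => if g ∈ H₀ then ψ g else 0), Finset.sum_filter]
      refine Finset.sum_congr rfl fun g _ => ?_
      by_cases hg : g ∈ P <;> simp [h₀, hg]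
    rw [h1]
    simp_rw [← Finset.sum_filter (fun k => k ∈ K₀)]
    rw [Finset.sum_comm]
    refine Finset.sum_congr rfl fun g _ => ?_
    simp
  have hf : ∀ x a, CosetBalanced (fun m => ∑ g : P, if p g = m then φ (x * g * a) else 0) K := by
    intro x a
    rw [cosetBalanced_iff]
    intro m₁ m₂
    obtain ⟨u, rfl⟩ := hp m₁
    obtain ⟨v, rfl⟩ := hp m₂
    have h1 := (cosetBalanced_iff φ H).1 h (x * u) (v * a)
    rw [key H K hH (fun g => φ (x * u * g * (v * a)))] at h1
    refine Eq.trans (Finset.sum_congr rfl fun k _ => ?_) h1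
    congr 1
    rw [← Equiv.sum_comp ((Equiv.mulLeft u).trans (Equiv.mulRight v))]
    refine Finset.sum_congr rfl fun g _ => ?_
    simp [mul_assoc]
  rw [cosetBalanced_iff]
  intro x a
  have h1 := (cosetBalanced_iff _ K').1 (hloc _ (hf x a)) 1 1
  rw [key H' K' hH' (fun g => φ (x * g * a))]
  simpa using h1
end CosetBalanced

section TransposeSimilar
open Polynomial

/-- A nondegenerate `F`-bilinear form for which multiplication by `X` is self-adjoint. -/
def HasSelfAdjointForm (F N : Type*) [Field F] [AddCommGroup N] [Module F N] [Module F[X] N] :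
    Prop :=
  ∃ B : N →ₗ[F] N →ₗ[F] F, (∀ x y, B ((X : F[X]) • x) y = B x ((X : F[X]) • y)) ∧
    ∀ x, (∀ y, B x y = 0) → x = 0

variable {F : Type*} [Field F]

theorem HasSelfAdjointForm.of_equiv {N N' : Type*} [AddCommGroup N] [Module F N] [Module F[X] N]
    [IsScalarTower F F[X] N] [AddCommGroup N'] [Module F N'] [Module F[X] N']
    [IsScalarTower F F[X] N'] (e : N ≃ₗ[F[X]] N') (h : HasSelfAdjointForm F N') :
    HasSelfAdjointForm F N := by
  obtain ⟨B, hB, hn⟩ := h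
  let e' : N ≃ₗ[F] N' := e.restrictScalars F
  refine ⟨(B.comp e'.toLinearMap).compl₂ e'.toLinearMap, fun x y => ?_, fun x hx => ?_⟩
  · have := hB (e x) (e y)
    simpa [e'] using this
  · refine e.map_eq_zero_iff.1 (hn _ fun y => ?_)
    have := hx (e.symm y)
    simpa [e'] using this

theorem HasSelfAdjointForm.directSum {ι : Type*} [Fintype ι] {N : ι → Type*}
    [∀ i, AddCommGroup (N i)] [∀ i, Module F (N i)] [∀ i, Module F[X] (N i)]
    [∀ i, IsScalarTower F F[X] (N i)] (h : ∀ i, HasSelfAdjointForm F (N i)) :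
    HasSelfAdjointForm F (∀ i, N i) := by
  classical
  choose B hB hn using h
  refine ⟨∑ i, ((B i).comp (LinearMap.proj i)).compl₂ (LinearMap.proj i),
    fun x y => ?_, fun x hx => ?_⟩
  · simp [hB]
  · funext i
    refine hn i _ fun y => ?_
    have := hx (Pi.single i y)
    simp only [LinearMap.coe_sum, Finset.sum_apply, LinearMap.compl₂_apply, LinearMap.coe_comp,
      Function.comp_apply, LinearMap.proj_apply] at this
    rw [Finset.sum_eq_single i] at this
    · simpa using this
    · intro j _ hj
      simp [Pi.single_eq_of_ne hj]
    · simp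

theorem hasSelfAdjointForm_quotient {p : F[X]} (hp : Irreducible p) (e : ℕ) :
    HasSelfAdjointForm F (F[X] ⧸ F[X] ∙ p ^ e) := by
  classical
  change HasSelfAdjointForm F (F[X] ⧸ Ideal.span {p ^ e})
  set A := F[X] ⧸ Ideal.span {p ^ e} with hA
  rcases Nat.eq_zero_or_pos e with rfl | he
  · have : Subsingleton A := by
      rw [hA, Ideal.Quotient.subsingleton_iff]
      simp
    exact ⟨0, by simp, fun x _ => Subsingleton.elim _ _⟩
  have hv : (Ideal.Quotient.mk (Ideal.span {p ^ e}) (p ^ (e - 1)) : A) ≠ 0 := by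
    rw [Ne, Ideal.Quotient.eq_zero_iff_mem, Ideal.mem_span_singleton,
      pow_dvd_pow_iff hp.ne_zero hp.not_isUnit]
    lia
  obtain ⟨l, hl⟩ : ∃ l : Dual F A, l (Ideal.Quotient.mk (Ideal.span {p ^ e}) (p ^ (e - 1))) ≠ 0 := by
    by_contra! hcon
    exact hv ((forall_dual_apply_eq_zero_iff F _).1 hcon)
  have happ : ∀ x y : A, (LinearMap.mul F A).compr₂ l x y = l (x * y) := fun _ _ => rfl
  have hsmul : ∀ x : A, (X : F[X]) • x = Ideal.Quotient.mk (Ideal.span {p ^ e}) X * x :=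
    fun x => by
      obtain ⟨a, rfl⟩ := Ideal.Quotient.mk_surjective x
      rw [← map_mul]
      rfl
  refine ⟨(LinearMap.mul F A).compr₂ l, fun x y => ?_, fun x hx => ?_⟩
  · rw [happ, happ, hsmul, hsmul, mul_assoc, mul_left_comm]
  · obtain ⟨h, rfl⟩ := Ideal.Quotient.mk_surjective x
    by_contra hne
    rw [Ideal.Quotient.eq_zero_iff_mem, Ideal.mem_span_singleton] at hne
    have hdvd : EuclideanDomain.gcd h (p ^ e) ∣ p ^ (e - 1) := by
      obtain ⟨j, hj, hassoc⟩ :=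
        (dvd_prime_pow hp.prime e).1 (EuclideanDomain.gcd_dvd_right h (p ^ e))
      have : j ≠ e := by
        rintro rfl
        exact hne (hassoc.symm.dvd.trans (EuclideanDomain.gcd_dvd_left _ _))
      exact hassoc.dvd.trans (pow_dvd_pow _ (by lia))
    obtain ⟨c, hc⟩ := hdvd
    rw [EuclideanDomain.gcd_eq_gcd_ab] at hc
    have h0 := hx (Ideal.Quotient.mk _ (EuclideanDomain.gcdA h (p ^ e) * c))
    rw [happ, ← map_mul] at h0
    apply hl
    rw [← h0]
    congr 1
    rw [Ideal.Quotient.eq, Ideal.mem_span_singleton, hc]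
    exact ⟨EuclideanDomain.gcdB h (p ^ e) * c, by ring⟩

theorem hasSelfAdjointForm_of_torsion {F : Type} [Field F] {N : Type} [AddCommGroup N] [Module F N] [Module F[X] N]
    [IsScalarTower F F[X] N] [Module.Finite F[X] N] (h : Module.IsTorsion F[X] N) :
    HasSelfAdjointForm F N := by
  obtain ⟨ι, _, p, hp, e, ⟨f⟩⟩ := Module.equiv_directSum_of_isTorsion h
  classical
  exact .of_equiv (f.trans (DirectSum.linearEquivFunOnFintype F[X] ι _))
    (.directSum fun i => hasSelfAdjointForm_quotient (hp i) (e i))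

/-- Every invertible matrix over a field is similar to its transpose. -/
theorem exists_conj_eq_transpose {F : Type} [Field F] {ι : Type} [Fintype ι] [DecidableEq ι]
    (g : Matrix ι ι F) : ∃ s : GL ι F, g.transpose * (s : Matrix ι ι F) = s * g := by
  set a := Matrix.toLin' g
  obtain ⟨B, hB, hn⟩ : HasSelfAdjointForm F (AEval' a) := by
    have : Module.Finite F (AEval' a) := Module.Finite.equiv (AEval'.of a)
    have : Module.Finite F[X] (AEval' a) := Module.Finite.of_restrictScalars_finite F F[X] _
    exact hasSelfAdjointForm_of_torsion (AEval.isTorsion_of_finiteDimensional F (ι → F) a)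
  let o := AEval'.of a
  let S : Matrix ι ι F := Matrix.of fun i j => B (o (Pi.single i 1)) (o (Pi.single j 1))
  have hS : ∀ x y : ι → F, x ⬝ᵥ S.mulVec y = B (o x) (o y) := by
    intro x y
    have hexp : ∀ z : ι → F, z = ∑ i, z i • Pi.single i (1 : F) := fun z => by
      simpa using (pi_eq_sum_univ' z)
    conv_rhs => rw [hexp x, hexp y]
    simp only [dotProduct, Matrix.mulVec, S, Finset.mul_sum, map_sum, map_smul, LinearMap.coe_sum,
      Finset.sum_apply, LinearMap.smul_apply, smul_eq_mul, Matrix.of_apply]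
    rw [Finset.sum_comm]
    exact Finset.sum_congr rfl fun _ _ => Finset.sum_congr rfl fun _ _ => by ring
  have hXo : ∀ x : ι → F, o (g.mulVec x) = (X : F[X]) • o x := fun x => by
    rw [AEval'.X_smul_of]; rfl
  have hSu : IsUnit S := by
    rw [← Matrix.isUnit_transpose, ← Matrix.mulVec_injective_iff_isUnit]
    rw [← Matrix.coe_mulVecLin, injective_iff_map_eq_zero]
    intro x hx
    refine o.map_eq_zero_iff.1 (hn _ fun y => ?_)
    obtain ⟨y, rfl⟩ := o.surjective y
    rw [← hS, Matrix.dotProduct_mulVec, ← Matrix.mulVec_transpose]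
    simp only [Matrix.mulVecLin_apply] at hx
    rw [hx, zero_dotProduct]
  refine ⟨hSu.unit, ?_⟩
  rw [IsUnit.unit_spec]
  refine Matrix.ext fun i j => ?_
  have h1 := hB (o (Pi.single i 1)) (o (Pi.single j 1))
  rw [← hXo, ← hXo, ← hS, ← hS] at h1
  simpa [Matrix.mul_apply, Matrix.mulVec, dotProduct, Pi.single_apply] using h1

end TransposeSimilar

section SubspaceIncidence

variable {F : Type*} [Field F]

theorem card_lines_lt_card_lines [Finite F] {V W : Type*} [AddCommGroup V] [Module F V] [AddCommGroup W]
    [Module F W] (h : finrank F V < finrank F W) :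
    Nat.card {H : Submodule F V // finrank F H = 1} <
      Nat.card {H : Submodule F W // finrank F H = 1} := by
  rw [← Nat.card_congr (Projectivization.equivSubmodule F V),
    ← Nat.card_congr (Projectivization.equivSubmodule F W),
    Projectivization.card_of_finrank F V rfl, Projectivization.card_of_finrank F W rfl]
  refine Finset.sum_lt_sum_of_subset (i := finrank F V) (by simpa using h.le) (by simpa using h)
    (by simp) (pow_pos Nat.card_pos _) (by simp)

variable {V : Type*} [AddCommGroup V] [Module F V] [FiniteDimensional F V]

theorem finrank_map_mkQ_add {A B : Submodule F V} (h : A ≤ B) :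
    finrank F (B.map A.mkQ) + finrank F A = finrank F B := by
  have := (A.mkQ.comp B.subtype).finrank_range_add_finrank_ker
  rw [LinearMap.range_comp, Submodule.range_subtype, LinearMap.ker_comp, Submodule.ker_mkQ,
    (Submodule.comapSubtypeEquivOfLe h).finrank_eq] at this
  exact this

theorem card_lines_le_card_covers [Finite V] (A : Submodule F V) :
    Nat.card {H : Submodule F (V ⧸ A) // finrank F H = 1} ≤
      Nat.card {B : Submodule F V // finrank F B = finrank F A + 1 ∧ A ≤ B} := by
  refine Nat.card_le_card_of_injective
    (fun H => ⟨H.1.comap A.mkQ, ?_, Submodule.le_comap_mkQ A H.1⟩) fun H H' h => ?_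
  · rw [← finrank_map_mkQ_add (Submodule.le_comap_mkQ A H.1),
      Submodule.map_comap_eq_of_surjective A.mkQ_surjective, H.2, add_comm]
  · exact Subtype.ext (Submodule.comap_injective_of_surjective A.mkQ_surjective
      (congrArg Subtype.val h))

theorem card_coverees_le_card_lines [Finite F] (A : Submodule F V) :
    Nat.card {C : Submodule F V // finrank F C + 1 = finrank F A ∧ C ≤ A} ≤
      Nat.card {H : Submodule F (Dual F A) // finrank F H = 1} := by
  have : Finite (Dual F A) := Module.finite_of_finite F
  refine Nat.card_le_card_of_injective
    (fun C => ⟨(C.1.comap A.subtype).dualAnnihilator, ?_⟩) fun C C' h => ?_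
  · have h1 := Subspace.finrank_add_finrank_dualAnnihilator_eq (C.1.comap A.subtype)
    rw [(Submodule.comapSubtypeEquivOfLe C.2.2).finrank_eq] at h1
    have h2 := C.2.1
    lia
  · have h1 := Subspace.dualAnnihilator_inj.1 (congrArg Subtype.val h)
    have h2 := congrArg (Submodule.map A.subtype) h1
    rw [Submodule.map_comap_subtype, Submodule.map_comap_subtype, inf_eq_right.2 C.2.2,
      inf_eq_right.2 C'.2.2] at h2
    exact Subtype.ext h2

theorem card_common_covers_eq {A A' : Submodule F V} (hne : A ≠ A')
    (hA : finrank F A = finrank F A') :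
    Nat.card {B : Submodule F V // finrank F B = finrank F A + 1 ∧ A ≤ B ∧ A' ≤ B} =
      Nat.card {C : Submodule F V // finrank F C + 1 = finrank F A ∧ C ≤ A ∧ C ≤ A'} := by
  have hsum := Submodule.finrank_sup_add_finrank_inf_eq A A'
  have hlt : finrank F (A ⊓ A' : Submodule F V) < finrank F A := by
    refine Submodule.finrank_lt_finrank_of_lt (lt_of_le_of_ne inf_le_left fun h => hne ?_)
    exact Submodule.eq_of_le_of_finrank_eq (inf_eq_left.1 h) hA
  have hB : ∀ B : Submodule F V, finrank F B = finrank F A + 1 ∧ A ≤ B ∧ A' ≤ B →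
      A ⊔ A' = B := fun B hB =>
    Submodule.eq_of_le_of_finrank_le (sup_le hB.2.1 hB.2.2) (by lia)
  have hC : ∀ C : Submodule F V, finrank F C + 1 = finrank F A ∧ C ≤ A ∧ C ≤ A' →
      C = A ⊓ A' := fun C hC =>
    Submodule.eq_of_le_of_finrank_le (le_inf hC.2.1 hC.2.2) (by lia)
  refine Nat.card_congr ⟨fun B => ⟨A ⊓ A', ?_, inf_le_left, inf_le_right⟩,
    fun C => ⟨A ⊔ A', ?_, le_sup_left, le_sup_right⟩, fun B => Subtype.ext (hB _ B.2),
    fun C => Subtype.ext (hC _ C.2).symm⟩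
  · have h1 := hB _ B.2
    have h2 := B.2.1
    rw [← h1] at h2
    lia
  · have h1 := hC _ C.2
    have h2 := C.2.1
    rw [h1] at h2
    lia

open scoped Classical in
theorem sum_sq_incidence {α β : Type*} [Fintype α] [Fintype β] (f : α → ℚ)
    (r : β → α → Prop) : ∑ b, (∑ a, if r b a then f a else 0) ^ 2 =
      ∑ a, ∑ a', f a * f a' * Nat.card {b // r b a ∧ r b a'} := by
  simp_rw [sq, Finset.sum_mul_sum]
  rw [Finset.sum_comm]
  refine Finset.sum_congr rfl fun a _ => ?_
  rw [Finset.sum_comm]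
  refine Finset.sum_congr rfl fun a' _ => ?_
  rw [Nat.card_eq_fintype_card, Fintype.card_subtype, Finset.card_filter, Nat.cast_sum,
    Finset.mul_sum]
  refine Finset.sum_congr rfl fun b _ => ?_
  by_cases h1 : r b a <;> by_cases h2 : r b a' <;> simp [h1, h2]

open scoped Classical in
/-- Injectivity of the inclusion matrix between subspaces of dimensions `k` and `k + 1`. -/
theorem eq_zero_of_sum_subspaces_eq_zero [Finite F] {k : ℕ} (hk : 2 * k < finrank F V)
    [Fintype {A : Submodule F V // finrank F A = k}]
    (g : {A : Submodule F V // finrank F A = k} → ℚ)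
    (hg : ∀ B : Submodule F V, finrank F B = k + 1 → ∑ A, (if A.1 ≤ B then g A else 0) = 0)
    (A : {A : Submodule F V // finrank F A = k}) : g A = 0 := by
  have : Finite V := Module.finite_of_finite F
  have : Fintype (Submodule F V) := Fintype.ofFinite _
  let α := {A : Submodule F V // finrank F A = k}
  let β := {B : Submodule F V // finrank F B = k + 1}
  let γ := {C : Submodule F V // finrank F C + 1 = k}
  have h0 : ∑ b : β, (∑ a : α, if a.1 ≤ b.1 then g a else 0) ^ 2 = 0 :=
    Finset.sum_eq_zero fun b _ => by rw [hg b b.2, sq, zero_mul]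
  rw [sum_sq_incidence g fun (b : β) (a : α) => a.1 ≤ b.1] at h0
  have h1 := sum_sq_incidence g fun (c : γ) (a : α) => c.1 ≤ a.1
  have h2 : ∑ a : α, g a ^ 2 * ((Nat.card {b : β // a.1 ≤ b.1} : ℚ) -
      Nat.card {c : γ // c.1 ≤ a.1}) + ∑ c : γ, (∑ a : α, if c.1 ≤ a.1 then g a else 0) ^ 2 = 0 := by
    rw [h1, ← h0, ← Finset.sum_add_distrib]
    refine Finset.sum_congr rfl fun a _ => ?_
    rw [← eq_sub_iff_add_eq, ← Finset.sum_sub_distrib, eq_comm, Finset.sum_eq_single a]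
    · simp only [and_self]
      ring
    · intro a' _ hne
      have h := card_common_covers_eq (fun h => hne (Subtype.ext h).symm) (a.2.trans a'.2.symm)
      rw [a.2] at h
      rw [Nat.card_congr (Equiv.subtypeSubtypeEquivSubtypeInter _
        fun B : Submodule F V => a.1 ≤ B ∧ a'.1 ≤ B),
        Nat.card_congr (Equiv.subtypeSubtypeEquivSubtypeInter _
        fun C : Submodule F V => C ≤ a.1 ∧ C ≤ a'.1), h, sub_self]
    · simp
  have hpos : ∀ a : α, (Nat.card {c : γ // c.1 ≤ a.1} : ℚ) < Nat.card {b : β // a.1 ≤ b.1} := by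
    intro a
    have h := ((card_coverees_le_card_lines a.1).trans_lt
      (card_lines_lt_card_lines ?_)).trans_le (card_lines_le_card_covers a.1)
    · rw [a.2] at h
      rw [Nat.card_congr (Equiv.subtypeSubtypeEquivSubtypeInter _
        fun B : Submodule F V => a.1 ≤ B),
        Nat.card_congr (Equiv.subtypeSubtypeEquivSubtypeInter _
        fun C : Submodule F V => C ≤ a.1)]
      exact_mod_cast h
    · have h1 := a.1.finrank_quotient_add_finrank
      rw [Subspace.dual_finrank_eq]
      have h2 := a.2
      lia
  have h3 : ∑ a : α, g a ^ 2 * ((Nat.card {b : β // a.1 ≤ b.1} : ℚ) -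
      Nat.card {c : γ // c.1 ≤ a.1}) = 0 := by
    refine le_antisymm ?_ (Finset.sum_nonneg fun a _ =>
      mul_nonneg (sq_nonneg _) (sub_nonneg.2 (hpos a).le))
    have := Finset.sum_nonneg fun (c : γ) (_ : c ∈ Finset.univ) =>
      sq_nonneg (∑ a : α, if c.1 ≤ a.1 then g a else 0)
    linarith
  rw [Finset.sum_eq_zero_iff_of_nonneg fun a _ =>
      mul_nonneg (sq_nonneg _) (sub_nonneg.2 (hpos a).le)] at h3
  have h4 := h3 A (Finset.mem_univ _)
  rw [mul_eq_zero, sq_eq_zero_iff, sub_eq_zero] at h4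
  exact h4.resolve_right (hpos _).ne'

end SubspaceIncidence

section BlockTriangular
variable {F : Type} [Field F] [Finite F] {ι κ : Type} [Fintype ι] [DecidableEq ι] [LinearOrder κ]

/-- The block upper triangular invertible matrices, with rows and columns labelled by `β`, whose
diagonal blocks at the labels `c` with `t c = true` are identity matrices. -/
def blockTriangular (F : Type) [Field F] [Finite F] {ι κ : Type} [Fintype ι] [DecidableEq ι]
    [LinearOrder κ] (β : ι → κ) (t : κ → Bool) : Subgroup (GL ι F) :=
  let S : Submonoid (GL ι F) :=
    { carrier := {h | ∀ i j, (β j < β i → (h : Matrix ι ι F) i j = 0) ∧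
        (β i = β j → t (β j) = true → (h : Matrix ι ι F) i j = (1 : Matrix ι ι F) i j)}
      one_mem' := fun i j => ⟨fun h => Matrix.one_apply_ne fun e => h.ne (by rw [e]), fun _ _ => rfl⟩
      mul_mem' := by
        intro g h hg hh i j
        refine ⟨fun hij => ?_, fun hij ht => ?_⟩
        · rw [Units.val_mul, Matrix.mul_apply]
          refine Finset.sum_eq_zero fun k _ => ?_
          rcases lt_or_ge (β k) (β i) with hk | hk
          · rw [(hg i k).1 hk, zero_mul]
          · rw [(hh k j).1 (hij.trans_le hk), mul_zero]
        · rw [Units.val_mul, Matrix.mul_apply, ← mul_one (1 : Matrix ι ι F), Matrix.mul_apply]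
          refine Finset.sum_congr rfl fun k _ => ?_
          rcases lt_trichotomy (β k) (β i) with hk | hk | hk
          · rw [(hg i k).1 hk, Matrix.one_apply_ne (fun e => hk.ne (by rw [e])), zero_mul, zero_mul]
          · rw [(hg i k).2 hk.symm (by rw [hk, hij, ht]), (hh k j).2 (hk.trans hij) ht]
          · rw [(hh k j).1 (hij ▸ hk), Matrix.one_apply_ne (i := i) (fun e => hk.ne (by rw [← e])),
              mul_zero, zero_mul] }
  { S with
    inv_mem' := by
      intro g hg
      have : g⁻¹ = g ^ (Nat.card (GL ι F) - 1) := by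
        rw [inv_eq_iff_mul_eq_one, ← pow_succ', Nat.sub_add_cancel Nat.card_pos, pow_card_eq_one']
      change g⁻¹ ∈ S
      rw [this]
      exact S.pow_mem hg _ }

theorem mem_blockTriangular {β : ι → κ} {t : κ → Bool} {h : GL ι F} :
    h ∈ blockTriangular F β t ↔ ∀ i j, (β j < β i → (h : Matrix ι ι F) i j = 0) ∧
      (β i = β j → t (β j) = true → (h : Matrix ι ι F) i j = (1 : Matrix ι ι F) i j) :=
  Iff.rfl

/-- Restriction of block upper triangular matrices to the diagonal block labelled `c`. -/
def diagonalBlock (β : ι → κ) (t : κ → Bool) (c : κ) :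
    blockTriangular F β t →* GL {i // β i = c} F :=
  MonoidHom.toHomUnits
    { toFun := fun h => ((h : GL ι F) : Matrix ι ι F).submatrix Subtype.val Subtype.val
      map_one' := Matrix.submatrix_one _ Subtype.val_injective
      map_mul' := by
        intro g h
        ext ⟨i, hi⟩ ⟨j, hj⟩
        simp only [Subgroup.coe_mul, Units.val_mul, Matrix.submatrix_apply, Matrix.mul_apply]
        refine Eq.trans ?_ (Finset.sum_subtype (Finset.univ.filter fun k => β k = c) (by simp)
          fun k => ((g : GL ι F) : Matrix ι ι F) i k * ((h : GL ι F) : Matrix ι ι F) k j)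
        rw [Finset.sum_filter]
        refine Finset.sum_congr rfl fun k _ => ?_
        split_ifs with hk
        · rfl
        · rcases lt_or_gt_of_ne hk with hk | hk
          · rw [(g.2 i k).1 (hi ▸ hk), zero_mul]
          · rw [(h.2 k j).1 (hj ▸ hk), mul_zero] }

theorem diagonalBlock_apply (β : ι → κ) (t : κ → Bool) (c : κ) (h : blockTriangular F β t)
    (i j : {i // β i = c}) :
    (diagonalBlock β t c h : Matrix {i // β i = c} {i // β i = c} F) i j =
      ((h : GL ι F) : Matrix ι ι F) i j := rfl

theorem diagonalBlock_surjective (β : ι → κ) {t : κ → Bool} {c : κ} (hc : t c = false) :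
    Function.Surjective (diagonalBlock (F := F) β t c) := by
  intro m
  let E : Matrix {i // β i = c} {i // β i = c} F →* Matrix ι ι F :=
    { toFun := fun m => (Matrix.fromBlocks m 0 0 1).submatrix
        (Equiv.sumCompl (fun i => β i = c)).symm (Equiv.sumCompl (fun i => β i = c)).symm
      map_one' := by simp
      map_mul' := by intro a b; simp [Matrix.submatrix_mul_equiv, Matrix.fromBlocks_multiply] }
  have hE : ∀ i j, (Units.map E m : Matrix ι ι F) i j =
      if h : β i = c ∧ β j = c then m ⟨i, h.1⟩ ⟨j, h.2⟩ else (1 : Matrix ι ι F) i j := by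
    intro i j
    simp only [Units.coe_map, E, MonoidHom.coe_mk, OneHom.coe_mk, Matrix.submatrix_apply]
    by_cases hi : β i = c <;> by_cases hj : β j = c
    · simp [hi, hj, Equiv.sumCompl_symm_apply_of_pos]
    · simp [hi, hj, Equiv.sumCompl_symm_apply_of_pos, Equiv.sumCompl_symm_apply_of_neg]
      rw [Matrix.one_apply_ne]
      rintro rfl
      exact hj hi
    · simp [hi, hj, Equiv.sumCompl_symm_apply_of_pos, Equiv.sumCompl_symm_apply_of_neg]
      rw [Matrix.one_apply_ne]
      rintro rfl
      exact hi hj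
    · simp [hi, hj, Equiv.sumCompl_symm_apply_of_neg, Matrix.one_apply]
  refine ⟨⟨Units.map E m, fun i j => ⟨fun hij => ?_, fun hij ht => ?_⟩⟩, ?_⟩
  · rw [hE, dif_neg, Matrix.one_apply_ne]
    · rintro rfl; exact hij.false
    · rintro ⟨h1, h2⟩; rw [h1, h2] at hij; exact hij.false
  · rw [hE, dif_neg]
    rintro ⟨h1, h2⟩; rw [h2, hc] at ht; exact Bool.false_ne_true ht
  · ext i j
    rw [diagonalBlock_apply]
    change (Units.map E m : Matrix ι ι F) i j = _
    rw [hE, dif_pos ⟨i.2, j.2⟩]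

/-- A relation between balancedness conditions for a single diagonal block implies the
corresponding relation for the whole matrix group. -/
theorem CosetBalanced.blockTriangular_of_diagonalBlock {φ : GL ι F → ℚ} {μ : κ → κ} (hμ : Monotone μ) {c : κ}
    (hinj : ∀ x y, μ x = μ y → x = y ∨ μ x = c) {β β' : ι → κ} (hβ : ∀ i, μ (β i) = μ (β' i))
    {t t' s : κ → Bool} (hs : s c = false) (ht : ∀ x, μ x ≠ c → s (μ x) = t x)
    (ht' : ∀ x, μ x ≠ c → s (μ x) = t' x)
    (hloc : ∀ f : GL {i // μ (β i) = c} F → ℚ,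
      CosetBalanced f (blockTriangular F (fun i => β i) t) →
      CosetBalanced f (blockTriangular F (fun i => β' i) t'))
    (h : CosetBalanced φ (blockTriangular F β t)) : CosetBalanced φ (blockTriangular F β' t') := by
  have key : ∀ (γ : ι → κ) (r : κ → Bool), (∀ i, μ (β i) = μ (γ i)) →
      (∀ x, μ x ≠ c → s (μ x) = r x) → ∀ g : GL ι F, g ∈ blockTriangular F γ r ↔
      ∃ hg : g ∈ blockTriangular F (fun i => μ (β i)) s,
        diagonalBlock (fun i => μ (β i)) s c ⟨g, hg⟩ ∈
          blockTriangular F (fun i : {i // μ (β i) = c} => γ i) r := by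
    intro γ r hγ hr g
    constructor
    · intro hg
      refine ⟨fun i j => ⟨fun hij => (hg i j).1 ?_, fun hij hj => (hg i j).2 ?_ ?_⟩,
        fun i j => ⟨fun hij => (hg i j).1 hij, fun hij hj => ?_⟩⟩
      · simp only [hγ] at hij
        exact hμ.reflect_lt hij
      · simp only [hγ] at hij hj
        refine (hinj _ _ hij).resolve_right fun hc => ?_
        rw [← hij, hc, hs] at hj
        exact Bool.false_ne_true hj
      · simp only [hγ] at hij hj
        rw [← hr _ fun hc => ?_, hj]
        rw [hc, hs] at hj
        exact Bool.false_ne_true hj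
      · rw [diagonalBlock_apply]
        refine ((hg i j).2 hij hj).trans ?_
        simp only [Matrix.one_apply, Subtype.ext_iff]
    · rintro ⟨hg, hg'⟩ i j
      simp only [mem_blockTriangular, diagonalBlock_apply] at hg'
      refine ⟨fun hij => ?_, fun hij hj => ?_⟩
      · rcases (hμ hij.le).lt_or_eq with h1 | h1
        · exact (hg i j).1 (by simpa only [hγ] using h1)
        · have h2 := (hinj _ _ h1).resolve_left hij.ne
          exact (hg' ⟨i, by rw [hγ, ← h1, h2]⟩ ⟨j, by rw [hγ, h2]⟩).1 hij
      · by_cases hc : μ (γ j) = c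
        · refine ((hg' ⟨i, by rw [hγ, hij, hc]⟩ ⟨j, by rw [hγ, hc]⟩).2 hij hj).trans ?_
          simp only [Matrix.one_apply, Subtype.ext_iff]
        · refine (hg i j).2 (by simp only [hγ, hij]) ?_
          simp only [hγ]
          rw [hr _ hc, hj]
  exact h.of_quotient _ _ (diagonalBlock_surjective (fun i => μ (β i)) hs) (key β t (fun _ => rfl) ht)
    (key β' t' hβ ht') hloc

theorem CosetBalanced.blockTriangular_of_dual {κ' : Type} [LinearOrder κ'] {φ : GL ι F → ℚ} {β : ι → κ} {β' : ι → κ'}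
    {t : κ → Bool} {t' : κ' → Bool} (hβ : ∀ i j, β' i < β' j ↔ β j < β i)
    (ht : ∀ i, t' (β' i) = t (β i)) (h : CosetBalanced φ (blockTriangular F β t)) :
    CosetBalanced φ (blockTriangular F β' t') := by
  let T : GL ι F → GL ι F := fun g =>
    ⟨(g : Matrix ι ι F).transpose, ((g⁻¹ : GL ι F) : Matrix ι ι F).transpose,
      by rw [← Matrix.transpose_mul, ← Units.val_mul, inv_mul_cancel]; simp,
      by rw [← Matrix.transpose_mul, ← Units.val_mul, mul_inv_cancel]; simp⟩
  have hTT : ∀ g, T (T g) = g := fun g => by ext; simp [T]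
  have hTm : ∀ g h, T (g * h) = T h * T g := fun g h => by ext1; simp [T, Matrix.transpose_mul]
  have hT1 : T 1 = 1 := by ext1; simp [T]
  have hTi : ∀ g, T g⁻¹ = (T g)⁻¹ := fun g => by
    rw [eq_inv_iff_mul_eq_one, ← hTm, mul_inv_cancel, hT1]
  have hβ' : ∀ i j, β' i = β' j ↔ β i = β j := by
    intro i j
    have h1 := hβ i j
    have h2 := hβ j i
    constructor <;> intro e
    · simp only [e, lt_irrefl, false_iff, not_lt] at h1 h2
      exact le_antisymm h1 h2
    · simp only [e, lt_irrefl, iff_false, not_lt] at h1 h2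
      exact le_antisymm h2 h1
  have hT : ∀ g, g ∈ blockTriangular F β' t' ↔ T g ∈ blockTriangular F β t := by
    intro g
    rw [mem_blockTriangular, mem_blockTriangular, forall_comm]
    refine forall_congr' fun j => forall_congr' fun i => and_congr ?_ ?_
    · rw [hβ]; rfl
    · rw [hβ', ht, eq_comm]
      refine forall_congr' fun hij => ?_
      rw [hij, show (1 : Matrix ι ι F) i j = (1 : Matrix ι ι F) j i by
        simp only [Matrix.one_apply, eq_comm]]
      rfl
  refine h.of_conj_count fun g => ?_
  obtain ⟨s, hs⟩ := exists_conj_eq_transpose (g : Matrix ι ι F)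
  have hs' : T g * s = s * g := by ext1; exact hs
  refine Nat.card_congr (Equiv.subtypeEquiv
    { toFun := fun b => T (s * b)⁻¹
      invFun := fun a => s⁻¹ * (T a)⁻¹
      left_inv := fun b => by simp [hTT]
      right_inv := fun a => by simp [hTT] } fun b => ?_)
  rw [hT]
  have : T ((T (s * b)⁻¹)⁻¹ * g * T (s * b)⁻¹) = b⁻¹ * g * b := by
    rw [hTm, hTm, ← hTi, hTT, hTT, inv_inv, mul_inv_rev]
    rw [mul_assoc, mul_assoc, ← mul_assoc (T g), hs']
    group
  simp only [Equiv.coe_fn_mk, this]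

theorem CosetBalanced.blockTriangular_comp_perm {φ : GL ι F → ℚ} {β : ι → κ} {t : κ → Bool}
    (h : CosetBalanced φ (blockTriangular F β t)) (π : Equiv.Perm ι) :
    CosetBalanced φ (blockTriangular F (β ∘ π) t) := by
  let u : GL ι F := ⟨π.permMatrix F, (π⁻¹).permMatrix F,
    by simp [← Matrix.permMatrix_mul], by simp [← Matrix.permMatrix_mul]⟩
  have hu : ∀ (g : GL ι F) i j, ((u⁻¹ * g * u : GL ι F) : Matrix ι ι F) i j =
      (g : Matrix ι ι F) (π⁻¹ i) (π⁻¹ j) := by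
    intro g i j
    change ((π⁻¹).permMatrix F * (g : Matrix ι ι F) * π.permMatrix F) i j = _
    rw [PEquiv.mul_toMatrix_toPEquiv, PEquiv.toMatrix_toPEquiv_mul]
    rfl
  have hmem : ∀ g, g ∈ blockTriangular F (β ∘ π) t ↔ u⁻¹ * g * u ∈ blockTriangular F β t := by
    intro g
    rw [mem_blockTriangular, mem_blockTriangular, ← π⁻¹.forall_congr_right]
    refine forall_congr' fun i => ?_
    rw [← π⁻¹.forall_congr_right]
    refine forall_congr' fun j => ?_
    rw [hu]
    simp [Matrix.one_apply]
  refine h.of_conj_count fun g => Nat.card_congr (Equiv.subtypeEquiv (Equiv.mulRight u⁻¹) fun a => ?_)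
  rw [hmem]
  simp [mul_assoc]

theorem CosetBalanced.blockTriangular_of_adjacent {φ : GL ι F → ℚ} {c d : κ} (hcd : c ⋖ d)
    {β β' : ι → κ} (hβ : ∀ i, β i = β' i ∨ (β i = c ∨ β i = d) ∧ (β' i = c ∨ β' i = d))
    {t t' : κ → Bool} (ht : ∀ x, x ≠ c → x ≠ d → t x = t' x)
    (hloc : ∀ f : GL {i // (if β i = d then c else β i) = c} F → ℚ,
      CosetBalanced f (blockTriangular F (fun i => β i) t) →
      CosetBalanced f (blockTriangular F (fun i => β' i) t'))
    (h : CosetBalanced φ (blockTriangular F β t)) : CosetBalanced φ (blockTriangular F β' t') := by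
  have hne := hcd.lt.ne
  refine h.blockTriangular_of_diagonalBlock (μ := fun x => if x = d then c else x) (c := c)
    (s := fun x => if x = c then false else t x) ?_ ?_ ?_ (if_pos rfl) ?_ ?_ hloc
  · intro x y hxy
    dsimp only
    split_ifs with h1 h2 h2
    · rfl
    · exact hcd.le.trans (h1 ▸ hxy)
    · by_contra hx
      exact h1 ((h2 ▸ hxy).antisymm (hcd.ge_of_gt (not_le.1 hx)))
    · exact hxy
  · intro x y hxy
    split_ifs at hxy ⊢ <;> simp_all
  · intro i
    rcases hβ i with e | ⟨e | e, e' | e'⟩ <;> simp [e, hne] <;> simp [e', hne]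
  · intro x hx
    split_ifs at hx ⊢ <;> simp_all
  · intro x hx
    split_ifs at hx ⊢ <;> simp_all

theorem CosetBalanced.blockTriangular_comp_perm_label {m : ℕ} {φ : GL ι F → ℚ}
    (s : Equiv.Perm (Fin (m + 1))) {β : ι → Fin (m + 1)} {t : Fin (m + 1) → Bool}
    (h : CosetBalanced φ (blockTriangular F β t)) :
    CosetBalanced φ (blockTriangular F (s ∘ β) (t ∘ s.symm)) := by
  have hs : s ∈ Submonoid.closure
      (Set.range fun i : Fin m => Equiv.swap i.castSucc i.succ) := by
    rw [Equiv.Perm.mclosure_swap_castSucc_succ]; trivial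
  induction hs using Submonoid.closure_induction generalizing β t with
  | one => exact h
  | mul x y _ _ hx hy => exact hx (hy h)
  | mem x hx =>
    obtain ⟨i, rfl⟩ := hx
    have hcd : i.castSucc ⋖ i.succ := ⟨Fin.castSucc_lt_succ, fun x h1 h2 => by
      simp only [Fin.lt_def, Fin.val_castSucc, Fin.val_succ] at h1 h2
      omega⟩
    dsimp only
    generalize i.castSucc = c at hcd ⊢
    generalize i.succ = d at hcd ⊢
    refine h.blockTriangular_of_adjacent hcd (fun i => ?_) (fun x h1 h2 => ?_) fun f hf => ?_
    · by_cases h1 : β i = c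
      · simp [h1]
      by_cases h2 : β i = d
      · simp [h2]
      · simp [Equiv.swap_apply_of_ne_of_ne h1 h2]
    · simp [Equiv.swap_apply_of_ne_of_ne h1 h2]
    · have hval : ∀ i : {i // (if β i = d then c else β i) = c}, β i = c ∨ β i = d := by
        rintro ⟨i, hi⟩
        split_ifs at hi with h1
        · exact Or.inr h1
        · exact Or.inl hi
      refine hf.blockTriangular_of_dual (fun i j => ?_) fun i => ?_
      · rcases hval i with hi | hi <;> rcases hval j with hj | hj <;>
          simp [hi, hj, hcd.lt, hcd.le.not_gt]
      · simp

end BlockTriangular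

section CoordinateSubspaces

/-- The vectors whose support is contained in `{i | p i}`. -/
def coordinateSubspace (F : Type) [Field F] {ι : Type} (p : ι → Prop) : Submodule F (ι → F) where
  carrier := {v | ∀ i, ¬ p i → v i = 0}
  zero_mem' := fun _ _ => rfl
  add_mem' := fun hv hw i hi => by simp [hv i hi, hw i hi]
  smul_mem' := fun c v hv i hi => by simp [hv i hi]

theorem mem_coordinateSubspace {F : Type} [Field F] {ι : Type} {p : ι → Prop} {v : ι → F} :
    v ∈ coordinateSubspace F p ↔ ∀ i, ¬ p i → v i = 0 := Iff.rfl

theorem finrank_coordinateSubspace {F : Type} [Field F] {ι : Type} [Fintype ι] (p : ι → Prop) :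
    finrank F (coordinateSubspace F p) = Nat.card {i // p i} := by
  classical
  let e : coordinateSubspace F p ≃ₗ[F] ({i // p i} → F) :=
    { toFun := fun v i => v.1 i
      map_add' := fun _ _ => rfl
      map_smul' := fun _ _ => rfl
      invFun := fun w => ⟨fun i => if h : p i then w ⟨i, h⟩ else 0, fun i hi => dif_neg hi⟩
      left_inv := fun v => by
        ext i
        by_cases hi : p i
        · simp [hi]
        · simp [hi, v.2 i hi]
      right_inv := fun w => by
        ext i
        simp [i.2] }
  rw [e.finrank_eq, finrank_fintype_fun_eq_card, Nat.card_eq_fintype_card]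

theorem single_mem_coordinateSubspace {F : Type} [Field F] {ι : Type} [DecidableEq ι]
    {p : ι → Prop} {j : ι} (hj : p j) (x : F) :
    Pi.single j x ∈ coordinateSubspace F p := by
  intro i hi
  refine Pi.single_eq_of_ne (M := fun _ => F) ?_ x
  rintro rfl
  exact hi hj

variable {F : Type} [Field F] {ι : Type} [Fintype ι] [DecidableEq ι]

theorem map_mulVecLin_mul (g h : GL ι F) (A : Submodule F (ι → F)) :
    A.map (Matrix.mulVecLin ((g * h : GL ι F) : Matrix ι ι F)) =
      (A.map (Matrix.mulVecLin (h : Matrix ι ι F))).map (Matrix.mulVecLin (g : Matrix ι ι F)) := by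
  rw [Units.val_mul, Matrix.mulVecLin_mul, Submodule.map_comp]

theorem map_mulVecLin_one (A : Submodule F (ι → F)) :
    A.map (Matrix.mulVecLin ((1 : GL ι F) : Matrix ι ι F)) = A := by
  simp

theorem map_mulVecLin_eq_iff {g : GL ι F} {A B : Submodule F (ι → F)} :
    A.map (Matrix.mulVecLin (g : Matrix ι ι F)) = B ↔
      A = B.map (Matrix.mulVecLin ((g⁻¹ : GL ι F) : Matrix ι ι F)) := by
  constructor
  · rintro rfl
    rw [← map_mulVecLin_mul, inv_mul_cancel, map_mulVecLin_one]
  · rintro rfl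
    rw [← map_mulVecLin_mul, mul_inv_cancel, map_mulVecLin_one]

theorem mulVecLin_injective (g : GL ι F) :
    Function.Injective (Matrix.mulVecLin (g : Matrix ι ι F)) := by
  intro v w h
  simp only [Matrix.mulVecLin_apply] at h
  have := congrArg (((g⁻¹ : GL ι F) : Matrix ι ι F).mulVec) h
  simpa [Matrix.mulVec_mulVec, ← Units.val_mul] using this

theorem finrank_map_mulVecLin (g : GL ι F) (A : Submodule F (ι → F)) :
    finrank F (A.map (Matrix.mulVecLin (g : Matrix ι ι F))) = finrank F A :=
  (Submodule.equivMapOfInjective _ (mulVecLin_injective g) A).finrank_eq.symm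

theorem exists_map_mulVecLin_eq {A B : Submodule F (ι → F)} (h : finrank F A = finrank F B) :
    ∃ g : GL ι F, A.map (Matrix.mulVecLin (g : Matrix ι ι F)) = B := by
  obtain ⟨A', hA⟩ := A.exists_isCompl
  obtain ⟨B', hB⟩ := B.exists_isCompl
  have h' : finrank F A' = finrank F B' := by
    have h1 := Submodule.finrank_add_eq_of_isCompl hA
    have h2 := Submodule.finrank_add_eq_of_isCompl hB
    omega
  let e := (Submodule.prodEquivOfIsCompl A A' hA).symm ≪≫ₗ
    (LinearEquiv.prodCongr (LinearEquiv.ofFinrankEq A B h) (LinearEquiv.ofFinrankEq A' B' h')) ≪≫ₗ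
    Submodule.prodEquivOfIsCompl B B' hB
  let g : GL ι F := ⟨LinearMap.toMatrix' e.toLinearMap, LinearMap.toMatrix' e.symm.toLinearMap,
    by rw [← LinearMap.toMatrix'_comp]; simp, by rw [← LinearMap.toMatrix'_comp]; simp⟩
  have he : ∀ v, Matrix.mulVecLin (g : Matrix ι ι F) v = e v :=
    fun v => LinearMap.toMatrix'_mulVec e.toLinearMap v
  refine ⟨g, ?_⟩
  refine Submodule.eq_of_le_of_finrank_eq ?_ ?_
  · rintro _ ⟨a, ha, rfl⟩
    rw [he]
    have : (Submodule.prodEquivOfIsCompl A A' hA).symm a = (⟨a, ha⟩, 0) :=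
      Submodule.prodEquivOfIsCompl_symm_apply_left A A' hA ⟨a, ha⟩
    simp [e, this]
  · rw [finrank_map_mulVecLin, h]

theorem map_mulVecLin_coordinateSubspace_le_iff (g : Matrix ι ι F) (p r : ι → Prop) :
    (coordinateSubspace F p).map (Matrix.mulVecLin g) ≤ coordinateSubspace F r ↔
      ∀ i j, ¬ r i → p j → g i j = 0 := by
  constructor
  · intro h i j hi hj
    have := h ⟨_, single_mem_coordinateSubspace hj 1, rfl⟩ i hi
    simpa using this
  · rintro h _ ⟨v, hv, rfl⟩ i hi
    rw [Matrix.mulVecLin_apply, Matrix.mulVec, dotProduct]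
    refine Finset.sum_eq_zero fun j _ => ?_
    by_cases hj : p j
    · rw [h i j hi hj, zero_mul]
    · rw [hv j hj, mul_zero]

theorem mem_blockTriangular_iff_map_eq [Finite F] {κ : Type} [LinearOrder κ] {c d : κ}
    (hcd : c < d) {β : ι → κ} (hβ : ∀ i, β i = c ∨ β i = d) {t : κ → Bool} (hc : t c = false)
    (hd : t d = false) (g : GL ι F) :
    g ∈ blockTriangular F β t ↔
      (coordinateSubspace F fun i => β i = c).map (Matrix.mulVecLin (g : Matrix ι ι F)) =
        coordinateSubspace F fun i => β i = c := by
  have h1 : ∀ A B : Submodule F (ι → F), finrank F A = finrank F B → (A = B ↔ A ≤ B) :=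
    fun A B h => ⟨fun e => e.le, fun e => Submodule.eq_of_le_of_finrank_eq e h⟩
  rw [h1 _ _ (finrank_map_mulVecLin g _), map_mulVecLin_coordinateSubspace_le_iff]
  refine forall_congr' fun i => forall_congr' fun j =>
    ⟨fun h hi hj => h.1 ?_, fun h => ⟨fun hij => ?_, ?_⟩⟩
  · rw [hj, (hβ i).resolve_left hi]
    exact hcd
  · rcases hβ i with hi | hi <;> rcases hβ j with hj | hj <;> simp_all [hcd.not_gt, hcd.ne']
  · rcases hβ j with hj | hj <;> simp [hj, hc, hd]

open scoped Classical in
/-- Vanishing of the sums over the translates of the stabilizer of a subspace passes to the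
stabilizer of a hyperplane of this subspace, provided that the dimension is small enough. -/
theorem CosetBalanced.stabilizer_hyperplane [Finite F] {f : GL ι F → ℚ} {H H' : Subgroup (GL ι F)}
    {E E' : Submodule F (ι → F)}
    (hH : ∀ g, g ∈ H ↔ E.map (Matrix.mulVecLin (g : Matrix ι ι F)) = E)
    (hH' : ∀ g, g ∈ H' ↔ E'.map (Matrix.mulVecLin (g : Matrix ι ι F)) = E')
    (hE : finrank F E = finrank F E' + 1) (hdim : 2 * finrank F E' < Fintype.card ι)
    (h : CosetBalanced f H) : CosetBalanced f H' := by
  have := Fintype.ofFinite F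
  have := Fintype.ofFinite (Submodule F (ι → F))
  rw [cosetBalanced_iff] at h ⊢
  intro x a
  let S : Submodule F (ι → F) → ℚ := fun A => ∑ y : GL ι F,
    if E'.map (Matrix.mulVecLin (y : Matrix ι ι F)) = A then f (y * a) else 0
  have hS : ∀ A : Submodule F (ι → F), finrank F A = finrank F E' → S A = 0 := by
    intro A hA
    refine eq_zero_of_sum_subspaces_eq_zero (F := F) (V := ι → F) (k := finrank F E') (by simpa using hdim)
      (fun A => S A.1) (fun B hB => ?_) ⟨A, hA⟩
    have h1 : ∀ C : Submodule F (ι → F), finrank F C = finrank F E' + 1 → (∑ y : GL ι F,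
        if C.map (Matrix.mulVecLin (y : Matrix ι ι F)) = B then f (y * a) else 0) = 0 := by
      intro C hC
      obtain ⟨u, hu⟩ := exists_map_mulVecLin_eq (hE.trans hC.symm)
      obtain ⟨v, hv⟩ := exists_map_mulVecLin_eq (hE.trans hB.symm)
      refine Eq.trans ?_ (h v (u⁻¹ * a))
      rw [← Equiv.sum_comp ((Equiv.mulLeft v).trans (Equiv.mulRight u⁻¹))]
      refine Finset.sum_congr rfl fun g _ => ?_
      have h2 : C.map (Matrix.mulVecLin ((v * g * u⁻¹ : GL ι F) : Matrix ι ι F)) = B ↔ g ∈ H := by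
        rw [hH, map_mulVecLin_mul, map_mulVecLin_mul, ← hu, ← map_mulVecLin_mul u⁻¹ u,
          inv_mul_cancel, map_mulVecLin_one, ← hv]
        exact (Submodule.map_injective_of_injective (mulVecLin_injective v)).eq_iff
      simp only [Equiv.trans_apply, Equiv.coe_mulLeft, Equiv.coe_mulRight, h2]
      simp only [mul_assoc]
    have h3 : ∀ y : GL ι F, (∑ A : {A : Submodule F (ι → F) // finrank F A = finrank F E'},
        if A.1 ≤ B then (if E'.map (Matrix.mulVecLin (y : Matrix ι ι F)) = A.1 then f (y * a) else 0)
          else 0) = ∑ C : Submodule F (ι → F), if finrank F C = finrank F E' + 1 ∧ E' ≤ C then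
            (if C.map (Matrix.mulVecLin (y : Matrix ι ι F)) = B then f (y * a) else 0) else 0 := by
      intro y
      rw [Finset.sum_eq_single ⟨E'.map (Matrix.mulVecLin (y : Matrix ι ι F)), finrank_map_mulVecLin y E'⟩,
        Finset.sum_eq_single (B.map (Matrix.mulVecLin ((y⁻¹ : GL ι F) : Matrix ι ι F)))]
      · have e1 : (B.map (Matrix.mulVecLin ((y⁻¹ : GL ι F) : Matrix ι ι F))).map
            (Matrix.mulVecLin (y : Matrix ι ι F)) = B := by
          rw [← map_mulVecLin_mul, mul_inv_cancel, map_mulVecLin_one]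
        have e2 : E' ≤ B.map (Matrix.mulVecLin ((y⁻¹ : GL ι F) : Matrix ι ι F)) ↔
            E'.map (Matrix.mulVecLin (y : Matrix ι ι F)) ≤ B := by
          rw [← Submodule.map_le_map_iff_of_injective (mulVecLin_injective y), e1]
        simp only [e1, e2, finrank_map_mulVecLin, hB, true_and, if_true]
      · intro C _ hC
        simp only [map_mulVecLin_eq_iff, hC, if_false, ite_self]
      · simp
      · intro A _ hA
        rw [if_neg fun e : E'.map _ = A.1 => hA (Subtype.ext e.symm), ite_self]
      · simp
    have h4 : ∀ A : {A : Submodule F (ι → F) // finrank F A = finrank F E'},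
        (if A.1 ≤ B then S A.1 else 0) = ∑ y : GL ι F, if A.1 ≤ B then
          (if E'.map (Matrix.mulVecLin (y : Matrix ι ι F)) = A.1 then f (y * a) else 0) else 0 := by
      intro A
      split_ifs <;> simp [S]
    rw [Finset.sum_congr rfl fun A _ => h4 A, Finset.sum_comm, Finset.sum_congr rfl fun y _ => h3 y,
      Finset.sum_comm]
    refine Finset.sum_eq_zero fun C _ => ?_
    split_ifs with hC
    · exact h1 C hC.1
    · simp
  refine Eq.trans ?_ (hS (E'.map (Matrix.mulVecLin (x : Matrix ι ι F))) (finrank_map_mulVecLin x E'))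
  refine Eq.trans ?_ (Equiv.sum_comp (Equiv.mulLeft x) _)
  refine Finset.sum_congr rfl fun g _ => ?_
  simp only [Equiv.coe_mulLeft, hH', map_mulVecLin_mul,
    (Submodule.map_injective_of_injective (mulVecLin_injective x)).eq_iff]

theorem CosetBalanced.blockTriangular_update [Finite F] {κ : Type} [LinearOrder κ] {c d : κ} (hcd : c ⋖ d)
    {φ : GL ι F → ℚ} {β : ι → κ} {t : κ → Bool} (hc : t c = false) (hd : t d = false) {i₀ : ι}
    (hi₀ : β i₀ = c) (hcard : Nat.card {i // β i = c} ≤ Nat.card {i // β i = d} + 1)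
    (h : CosetBalanced φ (blockTriangular F β t)) :
    CosetBalanced φ (blockTriangular F (Function.update β i₀ d) t) := by
  classical
  refine h.blockTriangular_of_adjacent hcd (fun i => ?_) (fun _ _ _ => rfl) fun f hf => ?_
  · by_cases hi : i = i₀
    · subst hi; simp [hi₀]
    · simp [hi]
  · have hval : ∀ i : {i // (if β i = d then c else β i) = c}, β i = c ∨ β i = d := by
      rintro ⟨i, hi⟩
      split_ifs at hi with h1
      · exact Or.inr h1
      · exact Or.inl hi
    have hval' : ∀ i : {i // (if β i = d then c else β i) = c},
        Function.update β i₀ d i = c ∨ Function.update β i₀ d i = d := by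
      intro i
      by_cases hi : i.1 = i₀
      · simp [hi]
      · simp [hi, hval i]
    have hne := hcd.lt.ne
    have e1 : Nat.card {i : {i // (if β i = d then c else β i) = c} // β i = c} =
        Nat.card {i // β i = c} :=
      Nat.card_congr (Equiv.subtypeSubtypeEquivSubtype
        (p := fun i => (if β i = d then c else β i) = c) (q := fun i => β i = c)
        fun {i} (h : β i = c) => by simp [h])
    have e2 : Nat.card {i : {i // (if β i = d then c else β i) = c} //
        Function.update β i₀ d i = c} + 1 = Nat.card {i // β i = c} := by
      have hup : ∀ i, Function.update β i₀ d i = c ↔ i ≠ i₀ ∧ β i = c := by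
        intro i
        by_cases hi : i = i₀
        · simp [hi, hne.symm]
        · simp [hi]
      rw [Nat.card_congr (Equiv.subtypeSubtypeEquivSubtype
          (p := fun i => (if β i = d then c else β i) = c)
          (q := fun i => Function.update β i₀ d i = c) fun h => by simp [((hup _).1 h).2]),
        Nat.card_eq_fintype_card, Fintype.card_subtype, Nat.card_eq_fintype_card,
        Fintype.card_subtype, ← Finset.card_erase_add_one
          (s := Finset.univ.filter fun i => β i = c) (a := i₀) (by simp [hi₀])]
      congr 2
      ext i
      simp [hup]
    have e3 : Fintype.card {i // (if β i = d then c else β i) = c} =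
        Nat.card {i // β i = c} + Nat.card {i // β i = d} := by
      rw [Fintype.card_subtype, Nat.card_eq_fintype_card, Fintype.card_subtype,
        Nat.card_eq_fintype_card, Fintype.card_subtype, ← Finset.card_union_of_disjoint]
      · congr 1
        ext i
        by_cases hi : β i = d <;> simp [hi]
      · refine Finset.disjoint_filter.2 fun i _ h1 h2 => hne (h1.symm.trans h2)
    refine hf.stabilizer_hyperplane (mem_blockTriangular_iff_map_eq hcd.lt hval hc hd)
      (mem_blockTriangular_iff_map_eq hcd.lt hval' hc hd) ?_ ?_
    · rw [finrank_coordinateSubspace, finrank_coordinateSubspace, e1, e2]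
    · rw [finrank_coordinateSubspace, e3]
      omega

end CoordinateSubspaces

section TypeBalanced

open scoped Classical in
theorem exists_perm_of_card_fiber_eq {α γ : Type} [Finite α] {f g : α → γ}
    (h : ∀ c, Nat.card {a // f a = c} = Nat.card {a // g a = c}) :
    ∃ e : Equiv.Perm α, ∀ a, g (e a) = f a := by
  have hne : ∀ c, Nonempty ({a // f a = c} ≃ {a // g a = c}) := fun c => (Finite.card_eq).1 (h c)
  exact ⟨Equiv.ofFiberEquiv fun c => (hne c).some, Equiv.ofFiberEquiv_map _⟩

theorem exists_perm_of_map_univ_eq {α γ : Type} [Fintype α] {f g : α → γ}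
    (h : Finset.univ.val.map f = Finset.univ.val.map g) :
    ∃ e : Equiv.Perm α, ∀ a, g (e a) = f a := by
  classical
  refine exists_perm_of_card_fiber_eq fun c => ?_
  have := congrArg (Multiset.count c) h
  simp only [Multiset.count_map] at this
  rw [Nat.card_eq_fintype_card, Nat.card_eq_fintype_card, Fintype.card_subtype,
    Fintype.card_subtype]
  simpa only [Finset.card, Finset.filter_val, eq_comm] using this

theorem exists_card_fiber_eq {κ : Type} [Fintype κ] {n : ℕ} {w : κ → ℕ} (hw : ∑ c, w c = n) :
    ∃ β : Fin n → κ, ∀ c, Nat.card {i // β i = c} = w c := by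
  have hcard : Fintype.card (Fin n) = Fintype.card (Σ c, Fin (w c)) := by simp [hw]
  let e := Fintype.equivOfCardEq hcard
  refine ⟨fun i => (e i).1, fun c => ?_⟩
  rw [Nat.card_congr (e.subtypeEquiv (q := fun x => x.1 = c) fun i => Iff.rfl),
    Nat.card_congr (Equiv.sigmaSubtype c)]
  simp

theorem sum_card_fiber {κ : Type} [Fintype κ] {n : ℕ} (β : Fin n → κ) :
    ∑ c, Nat.card {i // β i = c} = n := by
  classical
  simpa [Nat.card_eq_fintype_card] using Fintype.card_congr (Equiv.sigmaFiberEquiv β)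

variable {F : Type} [Field F] [Finite F] {n : ℕ}

/-- The multiset of block sizes together with the tags of the blocks. -/
noncomputable def blockType {m : ℕ} (β : Fin n → Fin (m + 1)) (t : Fin (m + 1) → Bool) : Multiset (ℕ × Bool) :=
  Finset.univ.val.map fun c => (Nat.card {i // β i = c}, t c)

/-- `φ` is balanced for all block triangular groups with block sizes and tags given by `M`. -/
def TypeBalanced (φ : GL (Fin n) F → ℚ) (m : ℕ) (M : Multiset (ℕ × Bool)) : Prop :=
  ∀ (β : Fin n → Fin (m + 1)) (t : Fin (m + 1) → Bool), blockType β t = M →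
    CosetBalanced φ (blockTriangular F β t)

variable {φ : GL (Fin n) F → ℚ} {m : ℕ}

theorem CosetBalanced.typeBalanced {β : Fin n → Fin (m + 1)} {t : Fin (m + 1) → Bool}
    (h : CosetBalanced φ (blockTriangular F β t)) : TypeBalanced φ m (blockType β t) := by
  intro β' t' he
  obtain ⟨s, hs⟩ := exists_perm_of_map_univ_eq he.symm
  have h1 := h.blockTriangular_comp_perm_label s
  obtain ⟨π, hπ⟩ := exists_perm_of_card_fiber_eq (f := β') (g := s ∘ β) fun c => by
    have h2 := congrArg Prod.fst (hs (s.symm c))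
    simp only [Equiv.apply_symm_apply] at h2
    rw [h2]
    exact Nat.card_congr (Equiv.subtypeEquivRight fun i => by simp [eq_comm, Equiv.eq_symm_apply])
  have h3 := h1.blockTriangular_comp_perm π
  have e1 : (s ∘ β) ∘ π = β' := funext hπ
  have e2 : t ∘ s.symm = t' := funext fun c => by
    simpa using (congrArg Prod.snd (hs (s.symm c))).symm
  rwa [e1, e2] at h3

theorem TypeBalanced.move {x y x' y' : ℕ × Bool} (hsum : x.1 + y.1 = x'.1 + y'.1)
    {N : Multiset (ℕ × Bool)}
    (hstep : ∀ (k : ℕ) (φ : GL (Fin n) F → ℚ) (β : Fin n → Fin (k + 2)) (t : Fin (k + 2) → Bool),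
      Nat.card {i // β i = 0} = x.1 → t 0 = x.2 → Nat.card {i // β i = 1} = y.1 → t 1 = y.2 →
      CosetBalanced φ (blockTriangular F β t) →
      ∃ (β' : Fin n → Fin (k + 2)) (t' : Fin (k + 2) → Bool),
        Nat.card {i // β' i = 0} = x'.1 ∧ t' 0 = x'.2 ∧ Nat.card {i // β' i = 1} = y'.1 ∧
        t' 1 = y'.2 ∧ (∀ c, c ≠ 0 → c ≠ 1 → (∀ i, β' i = c ↔ β i = c) ∧ t' c = t c) ∧
        CosetBalanced φ (blockTriangular F β' t'))
    (h : TypeBalanced φ m (x ::ₘ y ::ₘ N)) : TypeBalanced φ m (x' ::ₘ y' ::ₘ N) := by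
  intro β₀ t₀ h₀
  obtain ⟨l, rfl⟩ : ∃ l : List (ℕ × Bool), (l : Multiset (ℕ × Bool)) = N := Quot.exists_rep N
  have hm : m = l.length + 1 := by simpa [blockType] using congrArg Multiset.card h₀
  subst hm
  have hn : x.1 + (y.1 + (l.map Prod.fst).sum) = n := by
    have h1 := congrArg (fun M => (M.map Prod.fst).sum) h₀
    have h2 := sum_card_fiber β₀
    simp only [blockType, Multiset.map_map, Function.comp_def] at h1
    rw [Finset.sum] at h2
    rw [h2] at h1
    simp at h1
    omega
  let w : ℕ × Bool → ℕ × Bool → Fin (l.length + 2) → ℕ × Bool :=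
    fun x y => Fin.cons x (Fin.cons y l.get)
  have hmap : ∀ x y, Finset.univ.val.map (w x y) = x ::ₘ y ::ₘ (l : Multiset (ℕ × Bool)) := by
    intro x y
    rw [Fin.univ_val_map, List.ofFn_cons, List.ofFn_cons, List.ofFn_get]
    rfl
  obtain ⟨β, hβ⟩ := exists_card_fiber_eq (n := n) (w := fun c => (w x y c).1) (by
    rw [Finset.sum, ← Function.comp_def Prod.fst, ← Multiset.map_map, hmap]
    simpa using hn)
  have h1 := h β (fun c => (w x y c).2) (by
    rw [← hmap]
    exact Multiset.map_congr rfl fun c _ => Prod.ext (hβ c) rfl)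
  obtain ⟨β', t', e1, e2, e3, e4, e5, h2⟩ := hstep _ φ β _ (hβ 0) rfl (hβ 1) rfl h1
  refine h2.typeBalanced β₀ t₀ (h₀.trans ((hmap x' y').symm.trans
    (Multiset.map_congr rfl fun c _ => ?_)))
  refine Fin.cases (Prod.ext e1.symm e2.symm) (fun c => ?_) c
  refine Fin.cases (Prod.ext e3.symm e4.symm) (fun c => ?_) c
  have h3 := e5 c.succ.succ (Fin.succ_ne_zero _) (by simp [Fin.ext_iff])
  refine Prod.ext ?_ h3.2.symm
  rw [Nat.card_congr (Equiv.subtypeEquivRight h3.1), hβ]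
  rfl

end TypeBalanced

section TypeMoves

variable {F : Type} [Field F] [Finite F] {n : ℕ} {φ : GL (Fin n) F → ℚ} {m : ℕ}

theorem blockTriangular_le {κ : Type} [LinearOrder κ] {β β' : Fin n → κ} {t t' : κ → Bool}
    (h1 : ∀ i j, β' j < β' i → β j < β i ∨ β i = β j ∧ t (β j) = true)
    (h2 : ∀ i j, β' i = β' j → t' (β' j) = true → β i = β j ∧ t (β j) = true) :
    blockTriangular F β t ≤ blockTriangular F β' t' := by
  intro g hg
  refine mem_blockTriangular.2 fun i j => ⟨fun hij => ?_, fun hij ht => ?_⟩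
  · rcases h1 i j hij with h | ⟨h, h'⟩
    · exact (hg i j).1 h
    · rw [(hg i j).2 h h', Matrix.one_apply_ne]
      rintro rfl
      exact hij.ne rfl
  · exact (hg i j).2 (h2 i j hij ht).1 (h2 i j hij ht).2

theorem TypeBalanced.split {a b : ℕ} {N : Multiset (ℕ × Bool)}
    (h : TypeBalanced φ m ((a + b, true) ::ₘ (0, false) ::ₘ N)) :
    TypeBalanced φ m ((a, true) ::ₘ (b, true) ::ₘ N) := by
  classical
  refine h.move (by simp) fun k φ β t h0 h0' h1 h1' hb => ?_
  have hempty : ∀ i, β i ≠ 1 := by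
    intro i hi
    have := (Finite.card_eq_zero_iff (α := {i // β i = 1})).1 h1
    exact this.false ⟨i, hi⟩
  have hcard : (Finset.univ.filter fun i => β i = 0).card = a + b := by
    rw [← Fintype.card_subtype, ← Nat.card_eq_fintype_card, h0]
  obtain ⟨S, hS, hSb⟩ := Finset.exists_subset_card_eq (s := Finset.univ.filter fun i => β i = 0)
    (n := b) (by omega)
  have hS0 : ∀ i ∈ S, β i = 0 := fun i hi => by simpa using hS hi
  have h01 : (0 : Fin (k + 2)) < 1 := Fin.zero_lt_one
  refine ⟨fun i => if i ∈ S then 1 else β i, Function.update t 1 true, ?_, ?_, ?_, ?_, ?_, ?_⟩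
  · rw [Nat.card_eq_fintype_card, Fintype.card_subtype]
    have : (Finset.univ.filter fun i => (if i ∈ S then 1 else β i) = 0) =
        (Finset.univ.filter fun i => β i = 0) \ S := by
      ext i
      by_cases hi : i ∈ S <;> simp [hi]
    rw [this, Finset.card_sdiff_of_subset hS, hcard, hSb]
    simp
  · simp [h0']
  · rw [Nat.card_eq_fintype_card, Fintype.card_subtype]
    have : (Finset.univ.filter fun i => (if i ∈ S then 1 else β i) = 1) = S := by
      ext i
      by_cases hi : i ∈ S <;> simp [hi, hempty]
    rw [this, hSb]
  · simp
  · intro c hc0 hc1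
    refine ⟨fun i => ?_, by simp [hc1]⟩
    by_cases hi : i ∈ S
    · simp [hi, hS0, hc0.symm, hc1.symm]
    · simp [hi]
  · refine hb.mono (blockTriangular_le (fun i j hij => ?_) fun i j hij ht => ?_)
    · by_cases hi : i ∈ S <;> by_cases hj : j ∈ S <;> simp only [hi, hj, if_true, if_false] at hij
      · exact absurd hij (lt_irrefl _)
      · have : β j = 0 := by simpa using hij
        exact Or.inr ⟨by rw [hS0 i hi, this], by rw [this, h0']⟩
      · exact Or.inl (by rw [hS0 j hj]; exact h01.trans hij)
      · exact Or.inl hij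
    · by_cases hi : i ∈ S <;> by_cases hj : j ∈ S <;>
        simp only [hi, hj, if_true, if_false] at hij ht
      · simp [hS0 i hi, hS0 j hj, h0']
      · exact absurd hij.symm (hempty j)
      · exact absurd hij (hempty i)
      · exact ⟨hij, by simpa [hempty j] using ht⟩

theorem TypeBalanced.shift {a b : ℕ} {N : Multiset (ℕ × Bool)} (hab : b ≤ a)
    (h : TypeBalanced φ m ((b + 1, false) ::ₘ (a, false) ::ₘ N)) :
    TypeBalanced φ m ((b, false) ::ₘ (a + 1, false) ::ₘ N) := by
  classical
  refine h.move (by simp only; omega) fun k φ β t h0 h0' h1 h1' hb => ?_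
  obtain ⟨i₀, hi₀⟩ : ∃ i, β i = 0 := by
    by_contra! hne
    have : IsEmpty {i // β i = 0} := ⟨fun i => hne i.1 i.2⟩
    simp at h0
  have hcov : (0 : Fin (k + 2)) ⋖ 1 := by
    refine ⟨Fin.zero_lt_one, fun c hc hc' => ?_⟩
    rw [Fin.lt_def] at hc hc'
    simp at hc hc'
    omega
  refine ⟨Function.update β i₀ 1, t, ?_, h0', ?_, h1', fun c hc0 hc1 => ⟨fun i => ?_, rfl⟩,
    hb.blockTriangular_update hcov h0' h1' hi₀ (by simp only at h0 h1; omega)⟩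
  · have : (Finset.univ.filter fun i => Function.update β i₀ 1 i = 0) =
        (Finset.univ.filter fun i => β i = 0).erase i₀ := by
      ext i
      by_cases hi : i = i₀ <;> simp [hi]
    rw [Nat.card_eq_fintype_card, Fintype.card_subtype] at h0 ⊢
    rw [this, Finset.card_erase_of_mem (by simp [hi₀]), h0]
    simp
  · have : (Finset.univ.filter fun i => Function.update β i₀ 1 i = 1) =
        insert i₀ (Finset.univ.filter fun i => β i = 1) := by
      ext i
      by_cases hi : i = i₀ <;> simp [hi]
    rw [Nat.card_eq_fintype_card, Fintype.card_subtype] at h1 ⊢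
    rw [this, Finset.card_insert_of_notMem (by simp [hi₀]), h1]
  · by_cases hi : i = i₀
    · simp [hi, hi₀, hc0.symm, hc1.symm]
    · simp [hi]

theorem TypeBalanced.untag {p : ℕ} {N : Multiset (ℕ × Bool)}
    (h : TypeBalanced φ m ((p, true) ::ₘ N)) : TypeBalanced φ m ((p, false) ::ₘ N) := by
  intro β t hβ
  obtain ⟨c, -, hc⟩ := Multiset.mem_map.1 (hβ ▸ Multiset.mem_cons_self _ _ :
    (p, false) ∈ blockType β t)
  obtain ⟨hp, hc⟩ := Prod.mk.inj hc
  have h1 := h β (Function.update t c true) (by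
    have huniv : (Finset.univ : Finset (Fin (m + 1))).val =
        c ::ₘ (Finset.univ.erase c).val := by simp
    have hne : ∀ d ∈ (Finset.univ.erase c).val, d ≠ c := fun d hd => Finset.ne_of_mem_erase (s := Finset.univ) hd
    rw [blockType, huniv, Multiset.map_cons] at hβ ⊢
    rw [hp, hc, Multiset.cons_inj_right] at hβ
    rw [hp, Function.update_self, ← hβ]
    exact congrArg _ (Multiset.map_congr rfl fun d hd => by rw [Function.update_of_ne (hne d hd)]))
  refine h1.mono (blockTriangular_le (fun i j => Or.inl) fun i j hij ht => ⟨hij, ?_⟩)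
  by_cases hj : β j = c
  · simp [hj]
  · simpa [hj] using ht

/-- `φ` is balanced for all block triangular groups whose nonempty tagged blocks have sizes `σ`
and whose nonempty untagged blocks have sizes `τ`. -/
def PairBalanced (φ : GL (Fin n) F → ℚ) (σ τ : Multiset ℕ) : Prop :=
  ∀ m r, TypeBalanced φ m
    (σ.map (fun p => (p, true)) + τ.map (fun p => (p, false)) + Multiset.replicate r (0, false))

variable {σ τ : Multiset ℕ}

theorem PairBalanced.split {a b : ℕ} (h : PairBalanced φ ((a + b) ::ₘ σ) τ) :
    PairBalanced φ (a ::ₘ b ::ₘ σ) τ := by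
  intro m r
  have h1 := h m (r + 1)
  rw [Multiset.replicate_succ, Multiset.add_cons, Multiset.map_cons, Multiset.cons_add,
    Multiset.cons_add, Multiset.cons_swap] at h1
  simpa using h1.split

theorem PairBalanced.untag {a : ℕ} (h : PairBalanced φ (a ::ₘ σ) τ) :
    PairBalanced φ σ (a ::ₘ τ) := by
  intro m r
  have h1 := h m r
  rw [Multiset.map_cons, Multiset.cons_add, Multiset.cons_add] at h1
  simpa using h1.untag

theorem PairBalanced.shift {a b : ℕ} (hab : b ≤ a) (h : PairBalanced φ σ ((b + 1) ::ₘ a ::ₘ τ)) :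
    PairBalanced φ σ (b ::ₘ (a + 1) ::ₘ τ) := by
  intro m r
  have h1 := h m r
  simp only [Multiset.map_cons, Multiset.add_cons, Multiset.cons_add] at h1 ⊢
  exact h1.shift hab

theorem PairBalanced.add_replicate (h : PairBalanced φ σ τ) (k : ℕ) :
    PairBalanced φ σ (τ + Multiset.replicate k 0) := by
  intro m r
  have h1 := h m (k + r)
  rw [Multiset.replicate_add] at h1
  simpa [add_assoc] using h1

end TypeMoves

section Dominance

theorem sum_range_getD (l : List ℕ) (k : ℕ) :
    ∑ i ∈ Finset.range k, l.getD i 0 = (l.take k).sum := by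
  induction l generalizing k with
  | nil => simp
  | cons a l ih =>
    cases k with
    | zero => simp
    | succ k =>
      rw [Finset.sum_range_succ', List.take_succ_cons, List.sum_cons, ← ih, add_comm]
      simp

theorem map_range_getD (l : List ℕ) {N : ℕ} (hN : l.length ≤ N) :
    (Multiset.range N).map (l.getD · 0) = (l : Multiset ℕ) + Multiset.replicate (N - l.length) 0 := by
  obtain ⟨d, rfl⟩ := Nat.exists_eq_add_of_le hN
  rw [Nat.add_sub_cancel_left]
  clear hN
  rw [← Multiset.coe_range, Multiset.map_coe, ← Multiset.coe_replicate, Multiset.coe_add]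
  refine congrArg _ (List.ext_getElem (by simp) fun i h1 h2 => ?_)
  by_cases hi : i < l.length
  · simp [hi]
  · simp [List.getElem_append, hi]

theorem antitone_getD {l : List ℕ} (hl : l.Pairwise (· ≥ ·)) : Antitone (l.getD · 0) := by
  intro i j hij
  beta_reduce
  by_cases hj : j < l.length
  · rw [List.getD_eq_getElem _ _ hj, List.getD_eq_getElem _ _ (hij.trans_lt hj)]
    rcases hij.eq_or_lt with rfl | h
    · exact le_rfl
    · exact List.pairwise_iff_getElem.1 hl _ _ _ _ h
  · rw [List.getD_eq_default _ _ (not_lt.1 hj)]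
    exact Nat.zero_le _

theorem sum_le_sum_take {l : List ℕ} (hl : l.Pairwise (· ≥ ·)) {k : ℕ} {s : Multiset ℕ}
    (hs : s ≤ (l : Multiset ℕ)) (hk : Multiset.card s ≤ k) : s.sum ≤ (l.take k).sum := by
  induction l generalizing k s with
  | nil =>
    have : s = 0 := by simpa using hs
    simp [this]
  | cons a l ih =>
    rw [List.pairwise_cons] at hl
    cases k with
    | zero =>
      have : s = 0 := by simpa using hk
      simp [this]
    | succ k =>
      rw [List.take_succ_cons, List.sum_cons]
      rw [← Multiset.cons_coe] at hs
      by_cases ha : a ∈ s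
      · obtain ⟨s, rfl⟩ := Multiset.exists_cons_of_mem ha
        rw [Multiset.sum_cons]
        exact Nat.add_le_add_left (ih hl.2 ((Multiset.cons_le_cons_iff a).1 hs) (by simpa using hk)) _
      · have hs' := (Multiset.le_cons_of_notMem ha).1 hs
        rcases Multiset.empty_or_exists_mem s with rfl | ⟨b, hb⟩
        · simp
        · have hba : b ≤ a := hl.1 b (Multiset.mem_of_le hs' hb)
          obtain ⟨s, rfl⟩ := Multiset.exists_cons_of_mem hb
          rw [Multiset.sum_cons]
          exact Nat.add_le_add hba
            (ih hl.2 ((Multiset.le_cons_self _ _).trans hs') (by simpa using hk))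

theorem kLargestSum_coe {l : List ℕ} (hl : l.Pairwise (· ≥ ·)) (k : ℕ) :
    kLargestSum l k = (l.take k).sum := by
  refine le_antisymm (Multiset.sup_le.2 fun x hx => ?_) (Multiset.le_sup ?_)
  · obtain ⟨s, hs, rfl⟩ := Multiset.mem_map.1 hx
    rw [Multiset.mem_filter, Multiset.mem_powerset] at hs
    exact sum_le_sum_take hl hs.1 hs.2
  · refine Multiset.mem_map.2 ⟨(l.take k : List ℕ), ?_, rfl⟩
    rw [Multiset.mem_filter, Multiset.mem_powerset]
    exact ⟨(List.take_sublist k l).subperm, by simp⟩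

theorem min_le_sum_take {l : List ℕ} (hl : ∀ p ∈ l, 0 < p) (a d : ℕ) :
    min l.sum ((l.take a).sum + d) ≤ (l.take (a + d)).sum := by
  by_cases h : l.length ≤ a + d
  · rw [List.take_of_length_le h]
    exact min_le_left _ _
  · refine (min_le_right _ _).trans ?_
    rw [List.take_add, List.sum_append]
    refine Nat.add_le_add_left ?_ _
    have := List.length_le_sum_of_one_le ((l.drop a).take d)
      fun p hp => hl p (List.mem_of_mem_drop (List.mem_of_mem_take hp))
    rwa [List.length_take, List.length_drop, min_eq_left (by omega)] at this

theorem map_range_update {N i j : ℕ} (hij : i ≠ j) (hi : i < N) (hj : j < N) (f : ℕ → ℕ)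
    (x y : ℕ) : (Multiset.range N).map (Function.update (Function.update f i x) j y) =
      y ::ₘ x ::ₘ (((Finset.range N).erase j).erase i).val.map f := by
  have h1 : Multiset.range N = j ::ₘ i ::ₘ (((Finset.range N).erase j).erase i).val := by
    have h2 : (Finset.range N).val = Multiset.range N := rfl
    have hi' : i ∈ (Finset.range N).erase j := by simp [hi, hij]
    rw [← h2, Finset.erase_val, Multiset.cons_erase (Finset.mem_def.1 hi'), Finset.erase_val,
      Multiset.cons_erase (by simp [hj])]
  rw [h1, Multiset.map_cons, Multiset.map_cons, Function.update_self,
    Function.update_of_ne hij, Function.update_self]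
  congr 2
  refine Multiset.map_congr rfl fun k hk => ?_
  have hk' : k ∈ ((Finset.range N).erase j).erase i := hk
  simp only [Finset.mem_erase] at hk'
  rw [Function.update_of_ne hk'.2.1, Function.update_of_ne hk'.1]

theorem map_range_of_partial_sums_le {P : Multiset ℕ → Prop}
    (hP : ∀ a b τ, b ≤ a → P ((b + 1) ::ₘ a ::ₘ τ) → P (b ::ₘ (a + 1) ::ₘ τ)) {N : ℕ}
    {f g : ℕ → ℕ} (hf : Antitone f) (hg : Antitone g)
    (hfg : ∀ k, ∑ i ∈ Finset.range k, f i ≤ ∑ i ∈ Finset.range k, g i)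
    (hN : ∑ i ∈ Finset.range N, f i = ∑ i ∈ Finset.range N, g i)
    (h : P ((Multiset.range N).map f)) : P ((Multiset.range N).map g) := by
  induction hD : ∑ k ∈ Finset.range N,
    (∑ i ∈ Finset.range k, g i - ∑ i ∈ Finset.range k, f i) using Nat.strong_induction_on
    generalizing f with
  | _ D ih =>
  subst hD
  by_cases hne : ∃ k, k < N ∧ ∑ i ∈ Finset.range k, f i < ∑ i ∈ Finset.range k, g i
  · classical
    obtain ⟨hkN, hk⟩ := Nat.find_spec hne
    have hmin := fun l => Nat.find_min hne (m := l)
    generalize Nat.find hne = k₀ at hkN hk hmin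
    have heq : ∀ l < k₀, ∑ i ∈ Finset.range l, f i = ∑ i ∈ Finset.range l, g i := fun l hl =>
      (hfg l).antisymm (not_lt.1 fun h => hmin l hl ⟨hl.trans hkN, h⟩)
    obtain ⟨i, rfl⟩ : ∃ i, k₀ = i + 1 := Nat.exists_eq_succ_of_ne_zero (by rintro rfl; simp at hk)
    have hex : ∃ k, i + 1 < k ∧ ∑ i ∈ Finset.range k, f i = ∑ i ∈ Finset.range k, g i :=
      ⟨N, hkN, hN⟩
    obtain ⟨hk₁, hk₁'⟩ := Nat.find_spec hex
    have hmin₁ := fun l => Nat.find_min hex (m := l)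
    have hleN : Nat.find hex ≤ N := Nat.find_min' hex ⟨hkN, hN⟩
    generalize Nat.find hex = k₁ at hk₁ hk₁' hmin₁ hleN
    obtain ⟨j, rfl⟩ : ∃ j, k₁ = j + 1 := Nat.exists_eq_succ_of_ne_zero (by omega)
    have hlt : ∀ l, i < l → l ≤ j → ∑ i ∈ Finset.range l, f i < ∑ i ∈ Finset.range l, g i := by
      intro l hl hl'
      refine (hfg l).lt_of_ne fun e => ?_
      rcases (Nat.succ_le_of_lt hl).eq_or_lt with rfl | h
      · exact hk.ne e
      · exact hmin₁ l (by omega) ⟨h, e⟩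
    have hij : i < j := by omega
    have hfi : f i < g i := by
      have := heq i (by omega)
      rw [Finset.sum_range_succ, Finset.sum_range_succ] at hk
      omega
    have hfj : g j < f j := by
      have := hlt j hij le_rfl
      rw [Finset.sum_range_succ, Finset.sum_range_succ] at hk₁'
      omega
    have hfj' : f (j + 1) ≤ g (j + 1) := by
      have := hfg (j + 2)
      rw [Finset.sum_range_succ, Finset.sum_range_succ _ (j + 1)] at this
      omega
    have hfi' : ∀ l < i, f l = g l := by
      intro l hl
      have h1 := heq l (by omega)
      have h2 := heq (l + 1) (by omega)
      rw [Finset.sum_range_succ, Finset.sum_range_succ] at h2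
      omega
    obtain ⟨b, hb⟩ : ∃ b, f j = b + 1 := Nat.exists_eq_succ_of_ne_zero (by omega)
    set f' := Function.update (Function.update f i (f i + 1)) j b with hf'
    have hval : ∀ l, f' l = if l = j then b else if l = i then f i + 1 else f l := by
      intro l
      simp [hf', Function.update_apply]
    have hsum : ∀ k, ∑ l ∈ Finset.range k, f' l =
        ∑ l ∈ Finset.range k, f l + if i < k ∧ k ≤ j then 1 else 0 := by
      intro k
      induction k with
      | zero => simp
      | succ k ihk =>
        rw [Finset.sum_range_succ, ihk, Finset.sum_range_succ, hval]
        rcases eq_or_ne k j with rfl | hkj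
        · simp [hij, hb]
          omega
        · rcases eq_or_ne k i with rfl | hki
          · simp [hkj, hij]
            omega
          · have : (i < k ∧ k ≤ j) ↔ (i < k + 1 ∧ k + 1 ≤ j) := by omega
            simp only [hkj, hki, if_false, this]
            omega
    have hanti : Antitone f' := by
      refine antitone_nat_of_succ_le fun l => ?_
      have h1 := hf (Nat.le_succ l)
      have h2 := hg (Nat.le_succ l)
      have h3 : l + 1 = i → f i + 1 ≤ f l := by
        rintro rfl
        have := hfi' l (by omega)
        simp only [Nat.succ_eq_add_one] at h2
        omega
      have h4 : l = j → f (l + 1) ≤ b := by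
        rintro rfl
        simp only [Nat.succ_eq_add_one] at h2
        omega
      have h5 : l + 1 = j → f (l + 1) = b + 1 := by
        rintro rfl
        exact hb
      have h6 : l + 1 = i → f (l + 1) = f i := by
        rintro rfl
        rfl
      have h7 : l = i → f l = f i := by
        rintro rfl
        rfl
      rw [hval, hval]
      simp only [Nat.succ_eq_add_one] at h1 ⊢
      split_ifs <;> omega
    have hP' : P ((Multiset.range N).map f') := by
      rw [map_range_update hij.ne (by omega) (by omega)]
      refine hP _ _ _ ?_ ?_
      · have := hf hij.le
        omega
      · rwa [← hb, ← map_range_update hij.ne (by omega) (by omega), Function.update_eq_self,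
          Function.update_eq_self]
    refine ih _ ?_ hanti (fun k => ?_) ?_ hP' rfl
    · refine Finset.sum_lt_sum (fun k _ => ?_) ⟨i + 1, by simp [hkN], ?_⟩
      · rw [hsum]
        omega
      · have := hlt (i + 1) (by omega) (by omega)
        rw [hsum, if_pos ⟨by omega, by omega⟩]
        omega
    · rw [hsum]
      split_ifs with h1
      · exact hlt k h1.1 h1.2
      · exact hfg k
    · rw [hsum, if_neg (by omega), hN, add_zero]
  · have heq : ∀ l ≤ N, ∑ i ∈ Finset.range l, f i = ∑ i ∈ Finset.range l, g i := by
      intro l hl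
      rcases hl.eq_or_lt with rfl | hl
      · exact hN
      · exact (hfg l).antisymm (not_lt.1 fun h => hne ⟨l, hl, h⟩)
    rwa [Multiset.map_congr rfl fun l hl => ?_] at h
    have hl' := Multiset.mem_range.1 hl
    have h1 := heq l hl'.le
    have h2 := heq (l + 1) hl'
    rw [Finset.sum_range_succ, Finset.sum_range_succ] at h2
    omega

theorem exists_add_replicate_of_dominates {P : Multiset ℕ → Prop}
    (hP : ∀ a b τ, b ≤ a → P ((b + 1) ::ₘ a ::ₘ τ) → P (b ::ₘ (a + 1) ::ₘ τ))
    (hP0 : ∀ τ k, P τ → P (τ + Multiset.replicate k 0))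
    {τ τ' : Multiset ℕ} {m : ℕ} (hτ : ∀ p ∈ τ, 0 < p) (hτ' : ∀ p ∈ τ', 0 < p)
    (hsum : τ.sum + m = τ'.sum) (hdom : Dominates τ τ') (h : P (τ + Multiset.replicate m 1)) :
    ∃ k, P (τ' + Multiset.replicate k 0) := by
  set u := τ.sort (· ≥ ·)
  set l' := τ'.sort (· ≥ ·)
  have hu : (u : Multiset ℕ) = τ := Multiset.sort_eq _ _
  have hl' : (l' : Multiset ℕ) = τ' := Multiset.sort_eq _ _
  have hus : u.Pairwise (· ≥ ·) := Multiset.pairwise_sort _ _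
  have hls' : l'.Pairwise (· ≥ ·) := Multiset.pairwise_sort _ _
  have hupos : ∀ p ∈ u, 0 < p := fun p hp => hτ p (by rwa [← hu, Multiset.mem_coe])
  have hlpos : ∀ p ∈ l', 0 < p := fun p hp => hτ' p (by rwa [← hl', Multiset.mem_coe])
  rw [← hu, ← hl', Multiset.sum_coe, Multiset.sum_coe] at hsum
  have hls : (u ++ List.replicate m 1).Pairwise (· ≥ ·) := by
    refine List.pairwise_append.2 ⟨hus, List.pairwise_replicate.2 (Or.inr le_rfl), ?_⟩
    intro a ha b hb
    rw [List.eq_of_mem_replicate hb]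
    exact hupos a ha
  have hle : ∀ k, ((u ++ List.replicate m 1).take k).sum ≤ (l'.take k).sum := by
    intro k
    rw [List.take_append, List.sum_append, List.take_replicate, List.sum_replicate]
    have h1 := hdom (min k u.length)
    rw [← hu, ← hl', kLargestSum_coe hus, kLargestSum_coe hls'] at h1
    have h2 := min_le_sum_take hlpos (min k u.length) (k - u.length)
    rw [show min k u.length + (k - u.length) = k by omega] at h2
    have h3 : u.take (min k u.length) = u.take k := by
      rw [List.take_eq_take_iff]
      omega
    have h4 : (u.take k).sum ≤ u.sum := (List.take_sublist k u).sum_le_sum (by simp)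
    rw [h3] at h1
    simp only [smul_eq_mul, mul_one]
    omega
  have hlen : (u ++ List.replicate m 1).length ≤ (u ++ List.replicate m 1).length + l'.length :=
    Nat.le_add_right _ _
  have hlen' : l'.length ≤ (u ++ List.replicate m 1).length + l'.length := Nat.le_add_left _ _
  refine ⟨(u ++ List.replicate m 1).length + l'.length - l'.length, ?_⟩
  rw [← hl', ← map_range_getD l' hlen']
  refine map_range_of_partial_sums_le hP (antitone_getD hls) (antitone_getD hls') (fun k => ?_) ?_ ?_
  · rw [sum_range_getD, sum_range_getD]
    exact hle k
  · rw [sum_range_getD, sum_range_getD, List.take_of_length_le hlen, List.take_of_length_le hlen']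
    simpa using hsum
  · rw [map_range_getD _ hlen]
    refine hP0 _ _ ?_
    rwa [← Multiset.coe_add, hu, Multiset.coe_replicate]

end Dominance

section PairBalanced
variable {F : Type} [Field F] [Finite F] {n : ℕ} {φ : GL (Fin n) F → ℚ} {σ τ : Multiset ℕ}

theorem PairBalanced.split_sum {s : Multiset ℕ} (hs : s ≠ 0)
    (h : PairBalanced φ (s.sum ::ₘ σ) τ) : PairBalanced φ (s + σ) τ := by
  induction s using Multiset.induction generalizing σ with
  | empty => exact absurd rfl hs
  | cons a s ih =>
    by_cases hs' : s = 0
    · subst hs'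
      simpa using h
    · rw [Multiset.sum_cons] at h
      have h1 := h.split
      rw [Multiset.cons_swap] at h1
      simpa using ih hs' h1

theorem PairBalanced.split_groups {M : Multiset (Multiset ℕ)} (hM : ∀ s ∈ M, s ≠ 0)
    (h : PairBalanced φ (M.map Multiset.sum + σ) τ) : PairBalanced φ (M.sum + σ) τ := by
  induction M using Multiset.induction generalizing σ with
  | empty => simpa using h
  | cons s M ih =>
    rw [Multiset.map_cons, Multiset.cons_add] at h
    have h1 := h.split_sum (hM s (Multiset.mem_cons_self _ _))
    rw [add_left_comm] at h1
    rw [Multiset.sum_cons, add_comm s, add_assoc]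
    exact ih (fun s hs => hM s (Multiset.mem_cons_of_mem hs)) h1

theorem PairBalanced.untag_replicate {m p : ℕ}
    (h : PairBalanced φ (σ + Multiset.replicate m p) τ) :
    PairBalanced φ σ (τ + Multiset.replicate m p) := by
  induction m generalizing τ with
  | zero => simpa using h
  | succ m ih =>
    rw [Multiset.replicate_succ, Multiset.add_cons] at h
    have := ih h.untag
    simpa [Multiset.replicate_succ] using this

theorem PairBalanced.of_refines_of_dominates {σ' τ' : Multiset ℕ} (hσ : ∀ p ∈ σ, 0 < p)
    (hτ : ∀ p ∈ τ, 0 < p) (hτ' : ∀ p ∈ τ', 0 < p) (hsum : σ.sum + τ.sum = σ'.sum + τ'.sum)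
    (href : Refines σ' σ) (hdom : Dominates τ τ') (h : PairBalanced φ σ τ) :
    ∃ k, PairBalanced φ σ' (τ' + Multiset.replicate k 0) := by
  obtain ⟨hle, M, hM, rfl⟩ := href
  have h1 : PairBalanced φ (M.sum + 0) τ := by
    refine PairBalanced.split_groups (fun s hs => ?_) (by simpa using h)
    rintro rfl
    exact (hσ 0 (Multiset.mem_map.2 ⟨0, hs, rfl⟩)).ne rfl
  rw [add_zero, hM] at h1
  exact exists_add_replicate_of_dominates (P := PairBalanced φ σ')
    (fun a b τ hab h => h.shift hab) (fun τ k h => h.add_replicate k) hτ hτ' (by omega) hdom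
    h1.untag_replicate

end PairBalanced

section TransitiveSubsets

open scoped Classical in
/-- The deviation of the indicator function of `Y` from its mean value. -/
noncomputable def centeredIndicator {G : Type*} (Y : Set G) (g : G) : ℚ :=
  (if g ∈ Y then 1 else 0) - Nat.card Y / Nat.card G

theorem cosetBalanced_centeredIndicator_iff {G : Type*} [Group G] [Finite G] (Y : Set G)
    (H : Subgroup G) : CosetBalanced (centeredIndicator Y) H ↔
      ∃ r : ℕ, ∀ a b : G, Nat.card {y : G // y ∈ Y ∧ b⁻¹ * y * a ∈ H} = r := by
  classical
  have := Fintype.ofFinite G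
  have hcard : ∀ a b : G, (Nat.card {y : G // y ∈ Y ∧ b⁻¹ * y * a ∈ H} : ℚ) =
      ∑ y : G, if b⁻¹ * y * a ∈ H then (if y ∈ Y then 1 else 0) else 0 := by
    intro a b
    rw [Nat.card_eq_fintype_card, Fintype.card_subtype, Finset.card_filter, Nat.cast_sum]
    refine Finset.sum_congr rfl fun y _ => ?_
    by_cases h1 : y ∈ Y <;> by_cases h2 : b⁻¹ * y * a ∈ H <;> simp [h1, h2]
  have hH : (∑ g : G, if g ∈ H then (1 : ℚ) else 0) = Nat.card H := by
    rw [Nat.card_eq_fintype_card, Fintype.card_subtype, Finset.card_filter]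
    push_cast
    rfl
  have hsum : ∀ x a : G, (∑ g : G, if g ∈ H then centeredIndicator Y (x * g * a) else 0) =
      Nat.card {y : G // y ∈ Y ∧ x⁻¹ * y * a⁻¹ ∈ H} - Nat.card H * (Nat.card Y / Nat.card G) := by
    intro x a
    rw [hcard, ← hH, Finset.sum_mul, ← Equiv.sum_comp ((Equiv.mulLeft x).trans (Equiv.mulRight a))
      fun y => if x⁻¹ * y * a⁻¹ ∈ H then _ else _, ← Finset.sum_sub_distrib]
    refine Finset.sum_congr rfl fun g _ => ?_
    by_cases hg : g ∈ H <;> simp [hg, centeredIndicator, mul_assoc]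
  have hG : (Nat.card G : ℚ) ≠ 0 := Nat.cast_ne_zero.2 Nat.card_pos.ne'
  rw [cosetBalanced_iff]
  simp only [hsum, sub_eq_zero]
  constructor
  · intro h
    refine ⟨Nat.card {y : G // y ∈ Y ∧ (1 : G)⁻¹ * y * 1⁻¹ ∈ H}, fun a b => ?_⟩
    have h1 := h b a⁻¹
    rw [← h 1 1, inv_inv] at h1
    exact_mod_cast h1
  · rintro ⟨r, hr⟩ x a
    rw [hr]
    have h1 : ∑ a : G, (Nat.card {y : G // y ∈ Y ∧ (1 : G)⁻¹ * y * a ∈ H} : ℚ) =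
        Nat.card Y * Nat.card H := by
      simp only [hcard]
      rw [Finset.sum_comm, Nat.card_eq_fintype_card, Fintype.card_subtype, Finset.card_filter,
        Nat.cast_sum, Finset.sum_mul]
      refine Finset.sum_congr rfl fun y _ => ?_
      rw [← hH, Finset.mul_sum]
      refine Fintype.sum_equiv (Equiv.mulLeft y) _ _ fun a => ?_
      by_cases hy : y ∈ Y <;> by_cases ha : y * a ∈ H <;> simp [hy, ha]
    simp only [hr, Finset.sum_const, Finset.card_univ, ← Nat.card_eq_fintype_card, nsmul_eq_mul]
      at h1
    field_simp
    linarith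

end TransitiveSubsets

section AlphaFlags

variable {F : Type} [Field F] {q n : ℕ}

theorem card_index_eq (ρ : Composition n) (i : Fin ρ.length) :
    Nat.card {x // ρ.index x = i} = ρ.blocksFun i := by
  rw [Nat.card_congr (ρ.blocksFinEquiv.subtypeEquiv (p := fun x => x.1 = i)
    (q := fun x => ρ.index x = i) fun x => ?_).symm, Nat.card_congr (Equiv.sigmaSubtype i)]
  · simp
  · rw [show ρ.blocksFinEquiv x = ρ.embedding x.1 x.2 from rfl, ρ.index_embedding]

/-- The span of the standard basis vectors in the first `j` blocks of the composition `ρ`. -/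
def blockSpan (F : Type) [Field F] (ρ : Composition n) (j : Fin (ρ.length + 1)) :
    Submodule F (Fin n → F) :=
  coordinateSubspace F fun x => (ρ.index x).castSucc < j

theorem blockSpan_zero (ρ : Composition n) : blockSpan F ρ 0 = ⊥ := by
  refine eq_bot_iff.2 fun v hv => (Submodule.mem_bot F).2 (funext fun x => hv x ?_)
  simp

theorem blockSpan_last (ρ : Composition n) : blockSpan F ρ (Fin.last _) = ⊤ := by
  refine eq_top_iff.2 fun v _ x hx => absurd (Fin.castSucc_lt_last _) hx

theorem blockSpan_mono (ρ : Composition n) : Monotone (blockSpan F ρ) :=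
  fun _ _ hij _ hv x hx => hv x fun h => hx (h.trans_le hij)

theorem finrank_blockSpan_succ (ρ : Composition n) (i : Fin ρ.length) :
    finrank F (blockSpan F ρ i.succ) = finrank F (blockSpan F ρ i.castSucc) + ρ.blocksFun i := by
  classical
  rw [blockSpan, blockSpan, finrank_coordinateSubspace, finrank_coordinateSubspace,
    ← card_index_eq ρ i, Nat.card_eq_fintype_card, Nat.card_eq_fintype_card,
    Nat.card_eq_fintype_card, Fintype.card_subtype, Fintype.card_subtype, Fintype.card_subtype,
    ← Finset.card_union_of_disjoint]
  · congr 1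
    ext x
    simp [le_iff_lt_or_eq]
  · refine Finset.disjoint_filter.2 fun x _ h1 h2 => ?_
    rw [h2] at h1
    exact lt_irrefl _ h1

/-- The flag of spans of standard basis vectors. -/
def standardFlag (F : Type) [Field F] (α : SigmaNQ q n) : AlphaFlag F α where
  V := blockSpan F α.ρ
  mono := blockSpan_mono _
  bot_eq := blockSpan_zero _
  top_eq := blockSpan_last _
  dim := finrank_blockSpan_succ _
  B i _ m := Pi.single (α.ρ.embedding i m) 1
  B_mem i _ m := single_mem_coordinateSubspace (by
    rw [α.ρ.index_embedding]
    exact Fin.castSucc_lt_succ) 1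
  B_indep i hi := by
    rw [Fintype.linearIndependent_iff]
    intro c hc m
    simp only [← map_smul, ← map_sum] at hc
    rw [Submodule.mkQ_apply, Submodule.Quotient.mk_eq_zero] at hc
    have := hc (α.ρ.embedding i m) (by simp [α.ρ.index_embedding])
    simpa [Finset.sum_apply, Pi.single_apply] using this

theorem glMap_mul (g h : GL (Fin n) F) (v : Fin n → F) :
    glMap F (g * h) v = glMap F g (glMap F h v) := by
  simp [glMap, Matrix.mulVec_mulVec]

theorem glMap_inv_apply (g : GL (Fin n) F) (v : Fin n → F) : glMap F g⁻¹ (glMap F g v) = v := by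
  rw [← glMap_mul]
  simp [glMap]

theorem MapsAlphaFlag.mul {α : SigmaNQ q n} {g h : GL (Fin n) F} {A C D : AlphaFlag F α}
    (hg : MapsAlphaFlag F g C D) (hh : MapsAlphaFlag F h A C) : MapsAlphaFlag F (g * h) A D := by
  refine ⟨fun j => ?_, fun i hi m => ?_⟩
  · rw [← hg.1 j, ← hh.1 j]
    exact map_mulVecLin_mul g h _
  · have h1 := Submodule.mem_map_of_mem (f := glMap F g) (hh.2 i hi m)
    rw [hg.1, map_sub, ← glMap_mul] at h1
    simpa using add_mem h1 (hg.2 i hi m)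

theorem MapsAlphaFlag.inv {α : SigmaNQ q n} {g : GL (Fin n) F} {A C : AlphaFlag F α}
    (hg : MapsAlphaFlag F g A C) : MapsAlphaFlag F g⁻¹ C A := by
  have h0 : ∀ j, (C.V j).map (glMap F g⁻¹) = A.V j := by
    intro j
    exact (map_mulVecLin_eq_iff.1 (hg.1 j)).symm
  refine ⟨h0, fun i hi m => ?_⟩
  have h1 := Submodule.mem_map_of_mem (f := glMap F g⁻¹) (hg.2 i hi m)
  rw [h0, map_sub, glMap_inv_apply] at h1
  simpa using neg_mem h1

theorem mapsAlphaFlag_iff {α : SigmaNQ q n} {y a b : GL (Fin n) F} {A C E : AlphaFlag F α}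
    (ha : MapsAlphaFlag F a E A) (hb : MapsAlphaFlag F b E C) :
    MapsAlphaFlag F y A C ↔ MapsAlphaFlag F (b⁻¹ * y * a) E E := by
  refine ⟨fun h => (hb.inv.mul h).mul ha, fun h => ?_⟩
  have := (hb.mul h).mul ha.inv
  simpa [mul_assoc] using this

/-- The image of a flag under an invertible matrix. -/
def AlphaFlag.map {α : SigmaNQ q n} (g : GL (Fin n) F) (A : AlphaFlag F α) : AlphaFlag F α where
  V j := (A.V j).map (glMap F g)
  mono _ _ h := Submodule.map_mono (A.mono h)
  bot_eq := by rw [A.bot_eq, Submodule.map_bot]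
  top_eq := by
    rw [A.top_eq]
    refine Submodule.eq_top_of_finrank_eq ?_
    rw [glMap, finrank_map_mulVecLin, finrank_top]
  dim i := by
    rw [glMap, finrank_map_mulVecLin, finrank_map_mulVecLin, A.dim]
  B i hi m := glMap F g (A.B i hi m)
  B_mem i hi m := Submodule.mem_map_of_mem (A.B_mem i hi m)
  B_indep i hi := by
    have h1 := A.B_indep i hi
    rw [Fintype.linearIndependent_iff] at h1 ⊢
    intro c hc
    refine h1 c ?_
    simp only [← map_smul, ← map_sum] at hc ⊢
    rw [Submodule.mkQ_apply, Submodule.Quotient.mk_eq_zero] at hc ⊢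
    obtain ⟨v, hv, hvc⟩ := hc
    rwa [← mulVecLin_injective g hvc]

theorem mapsAlphaFlag_map {α : SigmaNQ q n} (g : GL (Fin n) F) (A : AlphaFlag F α) :
    MapsAlphaFlag F g A (A.map g) :=
  ⟨fun _ => rfl, fun _ _ _ => by simp [AlphaFlag.map]⟩

theorem AlphaFlag.exists_lift_basis {α : SigmaNQ q n} (A : AlphaFlag F α) (i : Fin α.ρ.length) :
    ∃ v : Fin (α.ρ.blocksFun i) → (Fin n → F), (∀ m, v m ∈ A.V i.succ) ∧
      LinearIndependent F (fun m => (A.V i.castSucc).mkQ (v m)) ∧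
      ∀ hi : i ∈ α.I, A.B i hi = v := by
  by_cases hi : i ∈ α.I
  · exact ⟨A.B i hi, A.B_mem i hi, A.B_indep i hi, fun _ => rfl⟩
  · have h1 : finrank F ((A.V i.succ).map (A.V i.castSucc).mkQ) = α.ρ.blocksFun i := by
      have := finrank_map_mkQ_add (A.mono i.castSucc_lt_succ.le)
      have := A.dim i
      omega
    let b := finBasisOfFinrankEq F _ h1
    choose v hv hvb using fun m => Submodule.mem_map.1 (b m).2
    refine ⟨v, hv, ?_, fun h => absurd h hi⟩
    simp only [hvb]
    exact b.linearIndependent.map' (Submodule.subtype _) (Submodule.ker_subtype _)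

theorem AlphaFlag.exists_mapsAlphaFlag {α : SigmaNQ q n} (A : AlphaFlag F α) :
    ∃ g, MapsAlphaFlag F g (standardFlag F α) A := by
  choose v hv hind hvB using A.exists_lift_basis
  let M : Matrix (Fin n) (Fin n) F :=
    Matrix.of fun x y => v (α.ρ.index y) (α.ρ.invEmbedding y) x
  have hM : ∀ i m, M.mulVecLin (Pi.single (α.ρ.embedding i m) 1) = v i m := by
    intro i m
    have h1 : ∀ y, M.mulVecLin (Pi.single y 1) = v (α.ρ.index y) (α.ρ.invEmbedding y) := by
      intro y
      rw [Matrix.mulVecLin_apply, Matrix.mulVec_single_one]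
      rfl
    rw [h1]
    exact congrArg (fun s : Σ i, Fin (α.ρ.blocksFun i) => v s.1 s.2)
      (α.ρ.blocksFinEquiv.symm_apply_apply ⟨i, m⟩)
  have hsum : ∀ w : Fin n → F, M.mulVecLin w =
      ∑ y, w y • v (α.ρ.index y) (α.ρ.invEmbedding y) := by
    intro w
    ext x
    simp [M, Matrix.mulVec, dotProduct, mul_comm]
  have hle : ∀ j, (blockSpan F α.ρ j).map M.mulVecLin ≤ A.V j := by
    rintro j _ ⟨w, hw, rfl⟩
    rw [hsum]
    refine Submodule.sum_mem _ fun y _ => ?_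
    by_cases hy : (α.ρ.index y).castSucc < j
    · exact Submodule.smul_mem _ _ (A.mono (Fin.castSucc_lt_iff_succ_le.1 hy) (hv _ _))
    · rw [hw y hy, zero_smul]
      exact zero_mem _
  have hker : ∀ j, ∀ w ∈ blockSpan F α.ρ j, M.mulVecLin w = 0 → w = 0 := by
    intro j
    induction j using Fin.induction with
    | zero =>
      intro w hw _
      rwa [blockSpan_zero, Submodule.mem_bot] at hw
    | succ i ih =>
      intro w hw h0
      set u : Fin n → F := ∑ m, w (α.ρ.embedding i m) • Pi.single (α.ρ.embedding i m) 1 with hu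
      have h1 : w - u ∈ blockSpan F α.ρ i.castSucc := by
        intro x hx
        by_cases hxi : α.ρ.index x = i
        · obtain ⟨m, rfl⟩ : ∃ m, α.ρ.embedding i m = x := by
            subst hxi
            exact ⟨_, α.ρ.embedding_comp_inv x⟩
          simp [hu, Finset.sum_apply, Pi.single_apply]
        · have h2 : ¬ (α.ρ.index x).castSucc < i.succ := by
            intro h
            exact hx (Fin.castSucc_lt_castSucc_iff.2 (lt_of_le_of_ne (Fin.castSucc_lt_succ_iff.1 h) hxi))
          have h3 : ∀ m, x ≠ α.ρ.embedding i m := by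
            rintro m rfl
            exact hxi (α.ρ.index_embedding i m)
          simp [hu, Finset.sum_apply, h3, hw x h2]
      have h2 := hle _ (Submodule.mem_map_of_mem (f := M.mulVecLin) h1)
      rw [map_sub, h0, zero_sub, neg_mem_iff, hu, map_sum] at h2
      simp only [map_smul, hM] at h2
      have h3 := Fintype.linearIndependent_iff.1 (hind i) (fun m => w (α.ρ.embedding i m)) (by
        simp only [← map_smul, ← map_sum]
        rwa [Submodule.mkQ_apply, Submodule.Quotient.mk_eq_zero])
      have h4 : u = 0 := by simp [hu, h3]
      rw [h4, sub_zero] at h1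
      exact ih w h1 h0
  have hunit : IsUnit M := by
    rw [← Matrix.mulVec_injective_iff_isUnit]
    intro w w' h
    refine sub_eq_zero.1 (hker (Fin.last _) _ (by rw [blockSpan_last]; trivial) ?_)
    rw [map_sub]
    exact sub_eq_zero.2 h
  obtain ⟨g, hg⟩ := hunit
  have hdim : ∀ j, finrank F (blockSpan F α.ρ j) = finrank F (A.V j) := by
    intro j
    induction j using Fin.induction with
    | zero => rw [blockSpan_zero, A.bot_eq]
    | succ i ih => rw [finrank_blockSpan_succ, A.dim, ih]
  refine ⟨g, fun j => ?_, fun i hi m => ?_⟩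
  · refine Submodule.eq_of_le_of_finrank_eq ?_ ?_
    · rw [glMap, hg]
      exact hle j
    · rw [glMap, finrank_map_mulVecLin]
      exact hdim j
  · rw [hvB i hi, glMap, hg]
    change M.mulVecLin (Pi.single (α.ρ.embedding i m) 1) - _ ∈ _
    rw [hM, sub_self]
    exact zero_mem _

theorem mapsAlphaFlag_standardFlag_iff [Finite F] {κ : Type} [LinearOrder κ] (α : SigmaNQ q n)
    {e : Fin α.ρ.length → κ} (he : StrictMono e) {t : κ → Bool}
    (ht : ∀ i, t (e i) = true ↔ i ∈ α.I) (g : GL (Fin n) F) :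
    MapsAlphaFlag F g (standardFlag F α) (standardFlag F α) ↔
      g ∈ blockTriangular F (fun x => e (α.ρ.index x)) t := by
  have hcol : ∀ y, glMap F g (Pi.single y 1) = fun x => (g : Matrix (Fin n) (Fin n) F) x y := by
    intro y
    rw [glMap, Matrix.mulVecLin_apply, Matrix.mulVec_single_one]
    rfl
  constructor
  · intro h
    refine mem_blockTriangular.2 fun x y => ⟨fun hxy => ?_, fun hxy hty => ?_⟩
    · exact (map_mulVecLin_coordinateSubspace_le_iff _ _ _).1
        (h.1 (α.ρ.index x).castSucc).le x y (lt_irrefl _)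
        (Fin.castSucc_lt_castSucc_iff.2 (he.lt_iff_lt.1 hxy))
    · have h1 := h.2 _ ((ht _).1 hty) (α.ρ.invEmbedding y) x (by
        simp [he.injective hxy])
      change (glMap F g (Pi.single (α.ρ.embedding _ _) 1) - Pi.single (α.ρ.embedding _ _) 1 :
        Fin n → F) x = 0 at h1
      rw [α.ρ.embedding_comp_inv, hcol] at h1
      rw [Matrix.one_apply]
      simpa [sub_eq_zero, Pi.single_apply] using h1
  · intro h
    rw [mem_blockTriangular] at h
    refine ⟨fun j => ?_, fun i hi m x hx => ?_⟩
    · refine Submodule.eq_of_le_of_finrank_eq ?_ (finrank_map_mulVecLin g _)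
      refine (map_mulVecLin_coordinateSubspace_le_iff _ _ _).2 fun x y hx hy => ?_
      exact (h x y).1 (he (Fin.castSucc_lt_castSucc_iff.1 (hy.trans_le (not_lt.1 hx))))
    · change (glMap F g (Pi.single (α.ρ.embedding i m) 1) - Pi.single (α.ρ.embedding i m) 1 :
        Fin n → F) x = 0
      have hidx := α.ρ.index_embedding i m
      rw [hcol, Pi.sub_apply, sub_eq_zero, Pi.single_apply, ← Matrix.one_apply]
      rcases (not_lt.1 hx).eq_or_lt with hx | hx
      · have hx' := Fin.castSucc_injective _ hx
        exact (h x _).2 (by rw [hidx, hx']) (by rw [hidx, ht]; exact hi)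
      · rw [(h x _).1 (he (by rw [hidx]; exact Fin.castSucc_lt_castSucc_iff.1 hx)),
          Matrix.one_apply_ne]
        rintro rfl
        rw [hidx] at hx
        exact lt_irrefl _ hx

theorem transitiveOnAlphaFlags_iff [Fintype F] {κ : Type} [LinearOrder κ] (α : SigmaNQ q n)
    {e : Fin α.ρ.length → κ} (he : StrictMono e) {t : κ → Bool}
    (ht : ∀ i, t (e i) = true ↔ i ∈ α.I) (Y : Set (GL (Fin n) F)) :
    TransitiveOnAlphaFlags F Y α ↔ CosetBalanced (centeredIndicator Y)
      (blockTriangular F (fun x => e (α.ρ.index x)) t) := by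
  rw [cosetBalanced_centeredIndicator_iff]
  refine exists_congr fun r => ⟨fun h a b => ?_, fun h A C => ?_⟩
  · rw [← h ((standardFlag F α).map a) ((standardFlag F α).map b)]
    refine Nat.card_congr (Equiv.subtypeEquivRight fun y => and_congr_right fun _ => ?_)
    rw [mapsAlphaFlag_iff (mapsAlphaFlag_map a _) (mapsAlphaFlag_map b _),
      mapsAlphaFlag_standardFlag_iff α he ht]
  · obtain ⟨a, ha⟩ := A.exists_mapsAlphaFlag
    obtain ⟨b, hb⟩ := C.exists_mapsAlphaFlag
    rw [← h a b]
    refine Nat.card_congr (Equiv.subtypeEquivRight fun y => and_congr_right fun _ => ?_)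
    rw [mapsAlphaFlag_iff ha hb, mapsAlphaFlag_standardFlag_iff α he ht]

end AlphaFlags

section Types

variable {F : Type} [Field F] {q n : ℕ}

/-- The multiset recording a pair of partitions by tagging the parts of the first one with `true`
and those of the second one with `false`. -/
def taggedParts (σ τ : Multiset ℕ) : Multiset (ℕ × Bool) :=
  σ.map (fun p => (p, true)) + τ.map (fun p => (p, false))

theorem taggedParts_inj {σ τ σ' τ' : Multiset ℕ} :
    taggedParts σ τ = taggedParts σ' τ' ↔ σ = σ' ∧ τ = τ' := by
  refine ⟨fun h => ?_, fun h => by rw [h.1, h.2]⟩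
  have h1 := congrArg (fun M => (M.filter fun x => x.2 = true).map Prod.fst) h
  have h2 := congrArg (fun M => (M.filter fun x => x.2 = false).map Prod.fst) h
  simp [taggedParts, Multiset.filter_map] at h1 h2
  exact ⟨h1, h2⟩

theorem SigmaNQ.map_univ_eq_taggedParts (α : SigmaNQ q n) :
    Finset.univ.val.map (fun i => (α.ρ.blocksFun i, decide (i ∈ α.I))) =
      taggedParts α.typeSigma α.typeTau := by
  have h1 : (Finset.univ : Finset (Fin α.ρ.length)).val = α.I.val + α.Iᶜ.val := by
    rw [← Finset.disjUnion_val (h := disjoint_compl_right), Finset.disjUnion_eq_union,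
      Finset.union_compl]
  rw [h1, Multiset.map_add, taggedParts, typeSigma, typeTau, Multiset.map_map, Multiset.map_map]
  congr 1
  · refine Multiset.map_congr rfl fun i hi => ?_
    have : i ∈ α.I := hi
    simp [this]
  · refine Multiset.map_congr rfl fun i hi => ?_
    have : i ∈ α.Iᶜ := hi
    simpa using this

theorem map_univ_eq_add_replicate {ι κ γ : Type} [Fintype ι] [Fintype κ] {e : ι → κ}
    (he : Function.Injective e) {r : ℕ} (hr : Fintype.card ι + r = Fintype.card κ) {f : κ → γ}
    {x : γ} (hf : ∀ c, c ∉ Set.range e → f c = x) :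
    Finset.univ.val.map f = Finset.univ.val.map (f ∘ e) + Multiset.replicate r x := by
  classical
  have h1 : (Finset.univ : Finset κ).val = (Finset.univ.map ⟨e, he⟩).val +
      (Finset.univ.map ⟨e, he⟩)ᶜ.val := by
    rw [← Finset.disjUnion_val (h := disjoint_compl_right), Finset.disjUnion_eq_union,
      Finset.union_compl]
  rw [h1, Multiset.map_add, Finset.map_val, Multiset.map_map]
  congr 1
  refine Multiset.eq_replicate.2 ⟨?_, fun y hy => ?_⟩
  · rw [Multiset.card_map, ← Finset.card_def, Finset.card_compl, Finset.card_map, Finset.card_univ]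
    omega
  · obtain ⟨c, hc, rfl⟩ := Multiset.mem_map.1 hy
    refine hf c fun ⟨i, hi⟩ => ?_
    have : c ∈ (Finset.univ.map ⟨e, he⟩)ᶜ := hc
    simp [← hi] at this

theorem SigmaNQ.blockType_eq (α : SigmaNQ q n) {m r : ℕ} (hr : α.ρ.length + r = m + 1)
    {e : Fin α.ρ.length → Fin (m + 1)} (he : Function.Injective e) {t : Fin (m + 1) → Bool}
    (ht : ∀ i, t (e i) = true ↔ i ∈ α.I) (ht' : ∀ c, c ∉ Set.range e → t c = false) :
    blockType (fun x => e (α.ρ.index x)) t =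
      taggedParts α.typeSigma α.typeTau + Multiset.replicate r (0, false) := by
  rw [blockType, map_univ_eq_add_replicate he (r := r) (x := (0, false)) (by simpa using hr),
    ← α.map_univ_eq_taggedParts]
  · congr 1
    refine Multiset.map_congr rfl fun i _ => Prod.ext ?_ ?_
    · rw [← card_index_eq α.ρ i]
      exact Nat.card_congr (Equiv.subtypeEquivRight fun x => he.eq_iff)
    · exact Bool.eq_iff_iff.2 (by simp [ht])
  · intro c hc
    refine Prod.ext ?_ (ht' c hc)
    have : IsEmpty {x // e (α.ρ.index x) = c} := ⟨fun x => hc ⟨_, x.2⟩⟩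
    exact Nat.card_of_isEmpty

theorem SigmaNQ.exists_blockType_eq [Fintype F] (α : SigmaNQ q n) {m r : ℕ}
    (hr : α.ρ.length + r = m + 1) (Y : Set (GL (Fin n) F)) :
    ∃ (β : Fin n → Fin (m + 1)) (t : Fin (m + 1) → Bool),
      blockType β t = taggedParts α.typeSigma α.typeTau + Multiset.replicate r (0, false) ∧
      (TransitiveOnAlphaFlags F Y α ↔
        CosetBalanced (centeredIndicator Y) (blockTriangular F β t)) := by
  classical
  have he : StrictMono (Fin.castLE (by omega) : Fin α.ρ.length → Fin (m + 1)) :=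
    Fin.strictMono_castLE _
  have ht : ∀ i : Fin α.ρ.length,
      (decide (∃ j ∈ α.I, Fin.castLE (by omega) j = (Fin.castLE (by omega) i : Fin (m + 1))) = true
        ↔ i ∈ α.I) := by
    intro i
    simp [he.injective.eq_iff]
  refine ⟨_, fun c => decide (∃ j ∈ α.I, Fin.castLE (by omega) j = c),
    α.blockType_eq hr he.injective ht fun c hc => ?_, transitiveOnAlphaFlags_iff α he ht Y⟩
  simp only [decide_eq_false_iff_not]
  rintro ⟨j, -, hj⟩
  exact hc ⟨j, hj⟩

theorem pairBalanced_of_transitiveOnAlphaFlags [Fintype F] {α : SigmaNQ q n}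
    {Y : Set (GL (Fin n) F)} (h : TransitiveOnAlphaFlags F Y α) :
    PairBalanced (centeredIndicator Y) α.typeSigma α.typeTau := by
  intro m r β t hβ
  have hr : α.ρ.length + r = m + 1 := by
    have h1 := congrArg Multiset.card hβ
    have h2 := congrArg Multiset.card α.map_univ_eq_taggedParts
    simp [blockType, taggedParts] at h1 h2
    omega
  obtain ⟨β', t', h1, h2⟩ := α.exists_blockType_eq hr Y
  exact (h2.1 h).typeBalanced β t (hβ.trans h1.symm)

theorem PairBalanced.transitiveOnAlphaFlags [Fintype F] {α : SigmaNQ q n} (hn : 0 < n)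
    {Y : Set (GL (Fin n) F)} {k : ℕ} (h : PairBalanced (centeredIndicator Y) α.typeSigma
      (α.typeTau + Multiset.replicate k 0)) : TransitiveOnAlphaFlags F Y α := by
  have hpos := α.ρ.length_pos_of_pos hn
  obtain ⟨β, t, h1, h2⟩ := α.exists_blockType_eq (m := α.ρ.length + k - 1) (r := k) (by omega) Y
  refine h2.2 (h _ 0 β t ?_)
  rw [h1, taggedParts]
  simp [add_assoc]

theorem InTheta.exists_sigmaNQ {σ τ : Multiset ℕ} (h : InTheta q n σ τ) :
    ∃ α : SigmaNQ q n, α.typeSigma = σ ∧ α.typeTau = τ := by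
  obtain ⟨hσ, hτ, hsum, htwo⟩ := h
  obtain ⟨L, hL⟩ : ∃ L : List (ℕ × Bool), (L : Multiset (ℕ × Bool)) = taggedParts σ τ :=
    Quot.exists_rep _
  have hmem : ∀ x ∈ L, (x.2 = true ∧ x.1 ∈ σ) ∨ (x.2 = false ∧ x.1 ∈ τ) := by
    intro x hx
    rw [← Multiset.mem_coe, hL, taggedParts, Multiset.mem_add, Multiset.mem_map,
      Multiset.mem_map] at hx
    rcases hx with ⟨p, hp, rfl⟩ | ⟨p, hp, rfl⟩
    · exact Or.inl ⟨rfl, hp⟩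
    · exact Or.inr ⟨rfl, hp⟩
  let ρ : Composition n :=
    { blocks := L.map Prod.fst
      blocks_pos := by
        intro p hp
        obtain ⟨x, hx, rfl⟩ := List.mem_map.1 hp
        rcases hmem x hx with h | h
        · exact hσ _ h.2
        · exact hτ _ h.2
      blocks_sum := by
        rw [← hsum, ← Multiset.sum_coe, ← Multiset.map_coe, hL, taggedParts, Multiset.map_add,
          Multiset.sum_add]
        simp }
  have hlen : ρ.length = L.length := List.length_map _
  have hblock : ∀ i, ρ.blocksFun i = (L.get (i.cast hlen)).1 := fun i => by
    simp [Composition.blocksFun, ρ]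
  let α : SigmaNQ q n :=
    { ρ := ρ
      I := Finset.univ.filter fun i => (L.get (i.cast hlen)).2 = true
      two := by
        intro hq i hi
        rw [hblock]
        refine htwo hq _ ((hmem _ (L.get_mem _)).resolve_left fun h => hi ?_).2
        simpa using h.1 }
  refine ⟨α, taggedParts_inj.1 ?_⟩
  rw [← α.map_univ_eq_taggedParts, ← hL, Fin.univ_val_map]
  refine congrArg _ (List.ext_getElem (by simpa using hlen) fun i h1 h2 => ?_)
  rw [List.getElem_ofFn]
  refine Prod.ext (hblock _) (Bool.eq_iff_iff.2 ?_)
  simp [α]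

end Types

/-- If `Y ⊆ GL(n,q)` is `(σ,τ)`-transitive, then `Y` is `(σ̂,τ̂)`-transitive for every
`(σ̂,τ̂) ∈ Θ_{n,q}` with `(σ,τ) ⪯ (σ̂,τ̂)`, i.e. such that `σ̂` refines `σ` and `τ ⊴ τ̂`. -/
theorem statement2 (q : ℕ) (hq : IsPrimePow q) (F : Type) [Field F] [Fintype F]
    (hF : Fintype.card F = q) (n : ℕ) (hn : 0 < n)
    (σ τ σ' τ' : Multiset ℕ) (hθ : InTheta q n σ τ) (hθ' : InTheta q n σ' τ')
    (href : Refines σ' σ) (hdom : Dominates τ τ')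
    (Y : Set (GL (Fin n) F)) (hY : STTransitive F q n Y σ τ) :
    STTransitive F q n Y σ' τ' := by
  obtain ⟨α, rfl, rfl, hα⟩ := hY
  obtain ⟨α', rfl, rfl⟩ := hθ'.exists_sigmaNQ
  obtain ⟨k, hk⟩ := (pairBalanced_of_transitiveOnAlphaFlags hα).of_refines_of_dominates hθ.1 hθ.2.1
    hθ'.2.1 (hθ.2.2.1.trans hθ'.2.2.1.symm) href hdom
  exact ⟨α', rfl, rfl, hk.transitiveOnAlphaFlags hn⟩
end

section
/- Let q be a prime power, let t be a positive integer, and let ε > 0. Then there exists N such that for every n ≥ N there is a nonempty t-design Y in GL(n,q) satisfying |Y|/|GL(n,q)| < ε. -/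
/-- A subset `Y` of `GL(n,q)` is a `t`-design if it is transitive on ordered `t`-tuples of
linearly independent vectors of `F_q^n`: there is a constant `r` such that for any two
linearly independent `t`-tuples `a`, `b` there are exactly `r` elements `g ∈ Y` with
`g·(a m) = b m` for all `m`. -/
def IsTDesignGL (F : Type) [Field F] [Fintype F] (n t : ℕ) (Y : Set (GL (Fin n) F)) : Prop :=
  ∃ r : ℕ, ∀ a b : Fin t → (Fin n → F), LinearIndependent F a → LinearIndependent F b →
    Nat.card {g : GL (Fin n) F // g ∈ Y ∧
      ∀ m, Matrix.mulVec (g : Matrix (Fin n) (Fin n) F) (a m) = b m} = r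

section Resilient

open scoped Pointwise
open Module

/-- A function all of whose fibres have the same size. -/
def Equidistributed {X Z : Type*} (f : X → Z) : Prop :=
  ∀ c c', Nat.card {x // f x = c} = Nat.card {x // f x = c'}

namespace Equidistributed

variable {X Y Z : Type*}

theorem comp_equiv {f : X → Z} (hf : Equidistributed f) (e : Y ≃ X) :
    Equidistributed fun y => f (e y) := by
  have key (c : Z) : Nat.card {y // f (e y) = c} = Nat.card {x // f x = c} :=
    Nat.card_congr (e.subtypeEquiv fun _ => Iff.rfl)
  intro c c'
  simp only [key, hf c c']

theorem equiv_comp {f : X → Z} (hf : Equidistributed f) (e : Z ≃ Z) :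
    Equidistributed fun x => e (f x) := by
  have key (c : Z) : Nat.card {x // e (f x) = c} = Nat.card {x // f x = e.symm c} :=
    Nat.card_congr (Equiv.subtypeEquivRight fun _ => e.eq_symm_apply.symm)
  intro c c'
  simp only [key]
  exact hf _ _

theorem card_mul_card_fiber [Finite X] [Finite Z] {f : X → Z} (hf : Equidistributed f) (c : Z) :
    Nat.card Z * Nat.card {x // f x = c} = Nat.card X := by
  have := Fintype.ofFinite Z
  rw [← Nat.card_congr (Equiv.sigmaFiberEquiv f), Nat.card_sigma,
    Finset.sum_congr rfl fun c' _ => hf c' c]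
  simp

/-- A function on a finite group is equidistributed if it is so on every translate of some
fixed family of elements. -/
theorem of_translates {H K : Type*} [Group H] [Finite H] [Finite K] [Nonempty K]
    {f : H → Z} (ι : K → H) (hf : ∀ h, Equidistributed fun k => f (h * ι k)) :
    Equidistributed f := by
  have := Fintype.ofFinite H
  have key (c : Z) :
      Nat.card {h // f h = c} * Nat.card K = ∑ h, Nat.card {k // f (h * ι k) = c} := by
    rw [← Nat.card_sigma, ← Nat.card_prod]
    refine Nat.card_congr (Equiv.trans ?_
      (Equiv.subtypeProdEquivSigmaSubtype fun h k => f (h * ι k) = c))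
    exact
      { toFun := fun p => ⟨(p.1.1 * (ι p.2)⁻¹, p.2), by simpa using p.1.2⟩
        invFun := fun p => (⟨p.1.1 * ι p.1.2, p.2⟩, p.1.2)
        left_inv := fun p => by simp
        right_inv := fun p => by simp }
  intro c c'
  refine Nat.eq_of_mul_eq_mul_right (Nat.card_pos (α := K)) ?_
  rw [key, key]
  exact Finset.sum_congr rfl fun h _ => hf h c c'

theorem exists_of_card_dvd (X Z : Type*) [Finite X] [Finite Z] (h : Nat.card Z ∣ Nat.card X) :
    ∃ f : X → Z, Equidistributed f := by
  obtain ⟨k, hk⟩ := h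
  obtain ⟨e⟩ : Nonempty (X ≃ Z × Fin k) := Finite.card_eq.mp (by simp [hk])
  have hfst : Equidistributed (Prod.fst : Z × Fin k → Z) := by
    have key (c : Z) : Nat.card {x : Z × Fin k // x.1 = c} = k := by
      rw [Nat.card_congr (β := Fin k)
        { toFun := fun x => x.1.2
          invFun := fun i => ⟨(c, i), rfl⟩
          left_inv := by rintro ⟨⟨_, _⟩, rfl⟩; rfl
          right_inv := fun _ => rfl }]
      simp
    intro c c'
    rw [key, key]
  exact ⟨_, hfst.comp_equiv e⟩

end Equidistributed

variable {F : Type*} [Field F] {V : Type*} [AddCommGroup V] [Module F V]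

/-- A function on `GL(V)` is `t`-resilient if it is equidistributed on each set of maps with
prescribed values on a subspace of dimension at most `t`. -/
def IsResilient {Z : Type*} (f : (V ≃ₗ[F] V) → Z) (t : ℕ) : Prop :=
  ∀ U : Submodule F V, finrank F U ≤ t → ∀ g : V ≃ₗ[F] V,
    Equidistributed fun h : fixingSubgroup (V ≃ₗ[F] V) (U : Set V) => f (g * h)

theorem Equidistributed.isResilient_zero [FiniteDimensional F V] {Z : Type*}
    {f : (V ≃ₗ[F] V) → Z} (hf : Equidistributed f) : IsResilient f 0 := by
  intro U hU g
  have hU' : U = ⊥ := Submodule.finrank_eq_zero.mp (Nat.le_zero.mp hU)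
  have htop (h : V ≃ₗ[F] V) : h ∈ fixingSubgroup (V ≃ₗ[F] V) (U : Set V) := by
    simp [mem_fixingSubgroup_iff, hU']
  exact hf.comp_equiv ((Equiv.subtypeUnivEquiv htop).trans (Equiv.mulLeft g))

/-- The action on `W` of the stabilizer of `W`. -/
def restrictStabilizer (W : Submodule F V) :
    MulAction.stabilizer (V ≃ₗ[F] V) W →* (W ≃ₗ[F] W) where
  toFun u := LinearEquiv.ofSubmodules u.val W W u.prop
  map_mul' _ _ := rfl
  map_one' := rfl

@[simp]
theorem coe_restrictStabilizer (W : Submodule F V) (u : MulAction.stabilizer (V ≃ₗ[F] V) W)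
    (w : W) : (restrictStabilizer W u w : V) = u.val w := rfl

/-- The block diagonal map acting by `A` on `W` and by `B` on the complement `W'`, identified
with `V ⧸ W`. -/
noncomputable def blockDiag {W W' : Submodule F V} (h : IsCompl W W') (A : W ≃ₗ[F] W)
    (B : (V ⧸ W) ≃ₗ[F] (V ⧸ W)) : V ≃ₗ[F] V :=
  (W.prodEquivOfIsCompl W' h).symm ≪≫ₗ
    A.prodCongr ((W.quotientEquivOfIsCompl W' h).symm ≪≫ₗ B ≪≫ₗ W.quotientEquivOfIsCompl W' h) ≪≫ₗ
    W.prodEquivOfIsCompl W' h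

section blockDiag

variable {W W' : Submodule F V} (h : IsCompl W W') (A : W ≃ₗ[F] W)
  (B : (V ⧸ W) ≃ₗ[F] (V ⧸ W))

theorem blockDiag_apply_left (w : W) : blockDiag h A B w = A w := by
  simp [blockDiag]

theorem blockDiag_apply_right (w : W') :
    blockDiag h A B w = W.quotientEquivOfIsCompl W' h (B (Submodule.Quotient.mk w)) := by
  simp [blockDiag]

theorem mk_blockDiag_apply (v : V) :
    (Submodule.Quotient.mk (blockDiag h A B v) : V ⧸ W) = B (Submodule.Quotient.mk v) := by
  obtain ⟨⟨w, w'⟩, rfl⟩ := (W.prodEquivOfIsCompl W' h).surjective v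
  have h0 (x : W) : (Submodule.Quotient.mk (x : V) : V ⧸ W) = 0 := by simp
  simp only [Submodule.coe_prodEquivOfIsCompl', map_add, blockDiag_apply_left,
    blockDiag_apply_right, Submodule.Quotient.mk_add, h0, zero_add,
    Submodule.mk_quotientEquivOfIsCompl_apply]

theorem blockDiag_mem_stabilizer :
    blockDiag h A B ∈ MulAction.stabilizer (V ≃ₗ[F] V) W := by
  refine le_antisymm ?_ fun w hw => ?_
  · rintro _ ⟨w, hw, rfl⟩
    simp [blockDiag_apply_left h A B ⟨w, hw⟩]
  · exact ⟨A.symm ⟨w, hw⟩, (A.symm ⟨w, hw⟩).2, by simp [blockDiag_apply_left]⟩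

theorem restrictStabilizer_blockDiag :
    restrictStabilizer W ⟨blockDiag h A B, blockDiag_mem_stabilizer h A B⟩ = A := by
  ext w
  simp [blockDiag_apply_left]

theorem reduce_blockDiag :
    LinearEquiv.reduce W ⟨blockDiag h A B, blockDiag_mem_stabilizer h A B⟩ = B := by
  ext z
  obtain ⟨v, rfl⟩ := W.mkQ_surjective z
  exact mk_blockDiag_apply h A B v

end blockDiag

theorem Submodule.exists_isCompl_inf_sup_inf_eq (U W : Submodule F V) :
    ∃ W', IsCompl W W' ∧ U ⊓ W ⊔ U ⊓ W' = U := by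
  obtain ⟨C, hC⟩ := exists_isCompl (U ⊓ W)
  have hdisj : Disjoint (C ⊓ U) W := by
    rw [disjoint_iff, inf_assoc, inf_comm, hC.inf_eq_bot]
  obtain ⟨W', hle, hW'⟩ := hdisj.exists_isCompl
  refine ⟨W', hW'.symm, le_antisymm (sup_le inf_le_left inf_le_left) ?_⟩
  calc U = (U ⊓ W ⊔ C) ⊓ U := by rw [hC.sup_eq_top, top_inf_eq]
    _ = U ⊓ W ⊔ C ⊓ U := sup_inf_assoc_of_le C inf_le_left
    _ ≤ _ := sup_le_sup_left (le_inf inf_le_right hle) _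

instance [Finite V] : Finite (V ≃ₗ[F] V) :=
  Finite.of_injective (fun e => (e : V → V)) DFunLike.coe_injective

/-- Gluing a resilient function on `GL(W)` with an equidistributed function on `GL(V ⧸ W)`. -/
theorem IsResilient.exists_succ [Finite V] {Z : Type*} [AddCommGroup Z] {W : Submodule F V}
    {s : ℕ} {f₁ : (W ≃ₗ[F] W) → Z} (h₁ : IsResilient f₁ s)
    {f₂ : ((V ⧸ W) ≃ₗ[F] (V ⧸ W)) → Z} (h₂ : Equidistributed f₂) :
    ∃ f : (V ≃ₗ[F] V) → Z, IsResilient f (s + 1) := by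
  have : Finite (V ⧸ W) := Finite.of_surjective _ W.mkQ_surjective
  let P := MulAction.stabilizer (V ≃ₗ[F] V) W
  have hp (g : V ≃ₗ[F] V) : (g : (V ≃ₗ[F] V) ⧸ P).out⁻¹ * g ∈ P := by
    obtain ⟨x, hx⟩ := QuotientGroup.mk_out_eq_mul P g
    rw [hx]
    simp
  let p (g : V ≃ₗ[F] V) : P := ⟨_, hp g⟩
  have hpk (g : V ≃ₗ[F] V) (k : P) : p (g * k) = p g * k := by
    ext1
    simp only [p, QuotientGroup.mk_mul_of_mem g k.2, Subgroup.coe_mul, mul_assoc]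
  refine ⟨fun g => f₁ (restrictStabilizer W (p g)) + f₂ (LinearEquiv.reduce W (p g)),
    fun U hU g => ?_⟩
  obtain ⟨W', hW', hUW'⟩ := U.exists_isCompl_inf_sup_inf_eq W
  by_cases hUW : U ≤ W
  · refine Equidistributed.of_translates
      (fun B => ⟨blockDiag hW' 1 B, (mem_fixingSubgroup_iff _).mpr fun u hu => ?_⟩) fun h => ?_
    · simpa using blockDiag_apply_left hW' 1 B ⟨u, hUW hu⟩
    · have key (B : (V ⧸ W) ≃ₗ[F] (V ⧸ W)) :
          p (g * (h * blockDiag hW' 1 B)) =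
            p (g * h) * ⟨_, blockDiag_mem_stabilizer hW' 1 B⟩ := by
        rw [← hpk, mul_assoc]
      simp only [Subgroup.coe_mul, key, map_mul, restrictStabilizer_blockDiag, reduce_blockDiag]
      exact (h₂.comp_equiv (Equiv.mulLeft _)).equiv_comp (Equiv.addLeft _)
  · have hfin : finrank F (U.comap W.subtype) ≤ s := by
      have hlt : finrank F (U ⊓ W : Submodule F V) < finrank F U :=
        Submodule.finrank_lt_finrank_of_lt (inf_lt_left.mpr hUW)
      have heq : finrank F (U.comap W.subtype) = finrank F (U ⊓ W : Submodule F V) := by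
        rw [inf_comm, ← Submodule.map_comap_subtype]
        exact (Submodule.finrank_map_subtype_eq W _).symm
      omega
    refine Equidistributed.of_translates
      (K := fixingSubgroup (W ≃ₗ[F] W) (U.comap W.subtype : Set W))
      (fun A => ⟨blockDiag hW' A 1, (mem_fixingSubgroup_iff _).mpr fun u hu => ?_⟩) fun h => ?_
    · rw [SetLike.mem_coe, ← hUW'] at hu
      obtain ⟨w, hw, w', hw', rfl⟩ := Submodule.mem_sup.mp hu
      have hA := (mem_fixingSubgroup_iff _).mp A.2 ⟨w, hw.2⟩ hw.1
      have e1 := blockDiag_apply_left hW' (A : W ≃ₗ[F] W) 1 ⟨w, hw.2⟩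
      have e2 := blockDiag_apply_right hW' (A : W ≃ₗ[F] W) 1 ⟨w', hw'.2⟩
      rw [LinearEquiv.smul_def] at hA
      rw [hA] at e1
      rw [LinearEquiv.coe_one, id, Submodule.quotientEquivOfIsCompl_apply_mk_right] at e2
      rw [LinearEquiv.smul_def, map_add]
      exact congrArg₂ (· + ·) e1 e2
    · have key (A : W ≃ₗ[F] W) :
          p (g * (h * blockDiag hW' A 1)) =
            p (g * h) * ⟨_, blockDiag_mem_stabilizer hW' A 1⟩ := by
        rw [← hpk, mul_assoc]
      simp only [Subgroup.coe_mul, key, map_mul, restrictStabilizer_blockDiag, reduce_blockDiag]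
      exact (h₁ _ hfin _).equiv_comp (Equiv.addRight _)

theorem Submodule.exists_finrank_eq [FiniteDimensional F V] {k : ℕ} (hk : k ≤ finrank F V) :
    ∃ W : Submodule F V, finrank F W = k := by
  obtain ⟨f, hf⟩ := exists_linearIndependent_of_le_finrank hk
  exact ⟨_, by simpa using finrank_span_eq_card hf⟩

theorem pow_dvd_card_linearEquiv [Fintype F] [FiniteDimensional F V] {m : ℕ}
    (hm : m < finrank F V) : Fintype.card F ^ m ∣ Nat.card (V ≃ₗ[F] V) := by
  rw [← Nat.card_congr (LinearMap.GeneralLinearGroup.generalLinearEquiv F V).toEquiv,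
    ← Nat.card_congr (Matrix.GeneralLinearGroup.toLin' (finBasis F V)).toEquiv,
    Matrix.card_GL_field]
  refine dvd_trans ?_ (Finset.dvd_prod_of_mem _ (Finset.mem_univ ⟨m, hm⟩))
  exact Nat.dvd_sub (pow_dvd_pow _ hm.le) dvd_rfl

theorem exists_isResilient {F : Type*} [Field F] [Fintype F] (m t : ℕ) {V : Type*}
    [AddCommGroup V] [Module F V] [Finite V] (hV : (t + 1) * (m + 1) ≤ finrank F V) :
    ∃ f : (V ≃ₗ[F] V) → Fin m → F, IsResilient f t := by
  induction t generalizing V with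
  | zero =>
    obtain ⟨f, hf⟩ := Equidistributed.exists_of_card_dvd (V ≃ₗ[F] V) (Fin m → F)
      (by simpa using pow_dvd_card_linearEquiv (F := F) (V := V) (m := m) (by omega))
    exact ⟨f, hf.isResilient_zero⟩
  | succ t ih =>
    have hm : m + 1 ≤ finrank F V := by nlinarith
    obtain ⟨W, hW⟩ := Submodule.exists_finrank_eq (Nat.sub_le (finrank F V) (m + 1))
    have : Finite (V ⧸ W) := Finite.of_surjective _ W.mkQ_surjective
    have hquot := W.finrank_quotient_add_finrank
    obtain ⟨f₁, h₁⟩ := ih (V := W) (by rw [hW]; rw [add_one_mul (t + 1)] at hV; omega)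
    obtain ⟨f₂, h₂⟩ := Equidistributed.exists_of_card_dvd ((V ⧸ W) ≃ₗ[F] (V ⧸ W)) (Fin m → F)
      (by simpa using pow_dvd_card_linearEquiv (F := F) (V := V ⧸ W) (m := m) (by omega))
    exact h₁.exists_succ h₂

theorem LinearIndependent.exists_linearEquiv_apply_eq [FiniteDimensional F V] {ι : Type*}
    {a b : ι → V} (ha : LinearIndependent F a) (hb : LinearIndependent F b) :
    ∃ g : V ≃ₗ[F] V, ∀ i, g (a i) = b i := by
  obtain ⟨g, hg⟩ := Submodule.exists_linearEquiv_restrict_eq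
    (ha.linearCombinationEquiv.symm ≪≫ₗ hb.linearCombinationEquiv)
  refine ⟨g, fun i => ?_⟩
  have h := hg (ha.linearCombinationEquiv (Finsupp.single i 1))
  simpa using h.symm

/-- The fibres of a `t`-resilient function meet all sets of maps with prescribed values on `t`
independent vectors in the same number of points. -/
theorem IsResilient.exists_card_eq [Finite V] {Z : Type*} [Finite Z] {t : ℕ}
    {f : (V ≃ₗ[F] V) → Z} (hf : IsResilient f t) (c : Z) :
    ∃ r : ℕ, ∀ a b : Fin t → V, LinearIndependent F a → LinearIndependent F b →
      Nat.card {g : V ≃ₗ[F] V // f g = c ∧ ∀ i, g (a i) = b i} = r := by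
  have : Nonempty Z := ⟨c⟩
  have key (a b : Fin t → V) (ha : LinearIndependent F a) (hb : LinearIndependent F b) :
      Nat.card Z * Nat.card {g : V ≃ₗ[F] V // f g = c ∧ ∀ i, g (a i) = b i} =
        Nat.card {g : V ≃ₗ[F] V // ∀ i, g (a i) = b i} := by
    obtain ⟨g₀, hg₀⟩ := ha.exists_linearEquiv_apply_eq hb
    have hfix (h : V ≃ₗ[F] V) :
        h ∈ fixingSubgroup (V ≃ₗ[F] V) (Submodule.span F (Set.range a) : Set V) ↔
          ∀ i, (g₀ * h) (a i) = b i := by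
      rw [mem_fixingSubgroup_iff]
      simp only [LinearEquiv.mul_apply, ← hg₀, g₀.injective.eq_iff, LinearEquiv.smul_def]
      refine ⟨fun H i => H _ (Submodule.subset_span ⟨i, rfl⟩), fun H y hy => ?_⟩
      have hle : Submodule.span F (Set.range a) ≤
          LinearMap.fixedSubmodule (h : V →ₗ[F] V) :=
        Submodule.span_le.mpr (by rintro _ ⟨i, rfl⟩; simpa using H i)
      simpa using hle hy
    let e : fixingSubgroup (V ≃ₗ[F] V) (Submodule.span F (Set.range a) : Set V) ≃
        {g : V ≃ₗ[F] V // ∀ i, g (a i) = b i} :=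
      (Equiv.mulLeft g₀).subtypeEquiv hfix
    have hequi := hf (Submodule.span F (Set.range a))
      ((finrank_range_le_card a).trans (by simp)) g₀
    rw [← Nat.card_congr e, ← hequi.card_mul_card_fiber c]
    congr 1
    symm
    refine Nat.card_congr ((e.subtypeEquiv (q := fun g => f g.1 = c) fun _ => Iff.rfl).trans ?_)
    exact (Equiv.subtypeSubtypeEquivSubtypeInter (fun g : V ≃ₗ[F] V => ∀ i, g (a i) = b i)
      fun g => f g = c).trans (Equiv.subtypeEquivRight fun _ => and_comm)
  by_cases h : ∃ a₀ : Fin t → V, LinearIndependent F a₀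
  · obtain ⟨a₀, ha₀⟩ := h
    refine ⟨Nat.card {g : V ≃ₗ[F] V // f g = c ∧ ∀ i, g (a₀ i) = a₀ i}, fun a b ha hb => ?_⟩
    refine Nat.eq_of_mul_eq_mul_left (Nat.card_pos (α := Z)) ?_
    rw [key a b ha hb, key a₀ a₀ ha₀ ha₀]
    obtain ⟨x, hx⟩ := ha₀.exists_linearEquiv_apply_eq ha
    obtain ⟨y, hy⟩ := ha₀.exists_linearEquiv_apply_eq hb
    refine Nat.card_congr (((Equiv.mulLeft y⁻¹).trans (Equiv.mulRight x)).subtypeEquiv fun g => ?_)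
    refine forall_congr' fun i => ?_
    simp only [Equiv.trans_apply, Equiv.coe_mulLeft, Equiv.coe_mulRight, LinearEquiv.mul_apply,
      hx, ← hy]
    exact (y.symm_apply_eq).symm
  · exact ⟨0, fun a _ ha => absurd ⟨a, ha⟩ h⟩

end Resilient

/-- For every fixed `t ≥ 1` and `ε > 0`, for all sufficiently large `n` there exists a
nonempty `t`-design `Y` in `GL(n,q)` with `|Y|/|GL(n,q)| < ε`. -/
theorem statement6 (q : ℕ) (hq : IsPrimePow q) (F : Type) [Field F] [Fintype F]
    (hF : Fintype.card F = q) (t : ℕ) (ht : 0 < t) (ε : ℝ) (hε : 0 < ε) :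
    ∃ N : ℕ, ∀ n, N ≤ n → ∃ Y : Set (GL (Fin n) F), Y.Nonempty ∧ IsTDesignGL F n t Y ∧
      (Nat.card Y : ℝ) < ε * (Nat.card (GL (Fin n) F) : ℝ) := by
  obtain ⟨m, hm⟩ := pow_unbounded_of_one_lt ε⁻¹
    (show (1 : ℝ) < (q : ℝ) by exact_mod_cast hq.one_lt)
  refine ⟨(t + 1) * (m + 1), fun n hn => ?_⟩
  obtain ⟨f, hf⟩ := exists_isResilient (F := F) m t (V := Fin n → F) (by simpa using hn)
  let e : GL (Fin n) F ≃* ((Fin n → F) ≃ₗ[F] (Fin n → F)) :=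
    Matrix.GeneralLinearGroup.toLin.trans (LinearMap.GeneralLinearGroup.generalLinearEquiv _ _)
  have he (g : GL (Fin n) F) (v : Fin n → F) :
      e g v = Matrix.mulVec (g : Matrix (Fin n) (Fin n) F) v := rfl
  have hequi : Equidistributed f := by
    have h := hf ⊥ (by simp) 1
    have htop (x : (Fin n → F) ≃ₗ[F] (Fin n → F)) :
        x ∈ fixingSubgroup ((Fin n → F) ≃ₗ[F] (Fin n → F))
          ((⊥ : Submodule F (Fin n → F)) : Set (Fin n → F)) := by
      simp [mem_fixingSubgroup_iff]
    simpa using h.comp_equiv (Equiv.subtypeUnivEquiv htop).symm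
  have hcard : q ^ m * Nat.card {g // f (e g) = 0} = Nat.card (GL (Fin n) F) := by
    simpa [hF] using (hequi.comp_equiv e.toEquiv).card_mul_card_fiber 0
  have hpos : 0 < Nat.card {g // f (e g) = 0} :=
    Nat.pos_of_mul_pos_left (hcard ▸ Nat.card_pos)
  refine ⟨{g | f (e g) = 0}, ?_, ?_, ?_⟩
  · exact Set.nonempty_coe_sort.mp (Nat.card_pos_iff.mp hpos).1
  · obtain ⟨r, hr⟩ := hf.exists_card_eq 0
    refine ⟨r, fun a b ha hb => ?_⟩
    rw [← hr a b ha hb]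
    exact Nat.card_congr (e.toEquiv.subtypeEquiv fun _ => Iff.rfl)
  · rw [← hcard, Nat.cast_mul, ← mul_assoc]
    refine lt_mul_of_one_lt_left (by exact_mod_cast hpos) ?_
    rw [Nat.cast_pow]
    rwa [inv_lt_iff_one_lt_mul₀' hε] at hm
end
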